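/- Let (A, {Δ(λ)}) be a split quasi-hereditary algebra over a commutative Noetherian ring R and let M be a finitely generated A-module that is projective over R. If Ext^1_A(M, ∇(λ)) = 0 for all λ ∈ Λ, then M belongs to F(Δ̃). Dually, if Ext^1_A(Δ(λ), M) = 0 for all λ ∈ Λ, then M belongs to F(∇̃). -/

import Mathlib

open scoped TensorProduct
open CategoryTheory

noncomputable section

section Core

variable (R : Type) [CommRing R] (A : Type) [Ring A] [Algebra R A]

/-- The action of `a : A` on an `A`-module as an `R`-linear endomorphism. -/
def actL (M : Type) [AddCommGroup M] [Module R M] [Module A M] [IsScalarTower R A M]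
    (a : A) : M →ₗ[R] M where
  toFun m := a • m
  map_add' := smul_add a
  map_smul' r m := (smul_comm r a m).symm

/-- The right `A`-module (i.e. `Aᵐᵒᵖ`-module) structure on the `R`-linear dual of a left
`A`-module `M`, given by `(aᵒᵖ • f) m = f (a • m)`. -/
instance dualModule (M : Type) [AddCommGroup M] [Module R M] [Module A M]
    [IsScalarTower R A M] : Module Aᵐᵒᵖ (M →ₗ[R] R) where
  smul a f := f.comp (actL R A M a.unop)
  one_smul f := by ext m; show f ((1 : Aᵐᵒᵖ).unop • m) = f m; simp
  mul_smul a b f := by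
    ext m
    show f ((a * b).unop • m) = f (b.unop • a.unop • m)
    simp [mul_smul]
  smul_zero a := rfl
  smul_add a f g := rfl
  add_smul a b f := by
    ext m
    show f ((a + b).unop • m) = f (a.unop • m) + f (b.unop • m)
    simp [add_smul]
  zero_smul f := by ext m; show f ((0 : Aᵐᵒᵖ).unop • m) = 0; simp

@[simp] lemma dualModule_smul_apply (M : Type) [AddCommGroup M] [Module R M] [Module A M]
    [IsScalarTower R A M] (a : Aᵐᵒᵖ) (f : M →ₗ[R] R) (m : M) :
    (a • f) m = f (a.unop • m) := rfl

instance dualTower (M : Type) [AddCommGroup M] [Module R M] [Module A M]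
    [IsScalarTower R A M] : IsScalarTower R Aᵐᵒᵖ (M →ₗ[R] R) := by
  constructor
  intro r a f
  ext m
  show f ((r • a).unop • m) = r • f (a.unop • m)
  rw [MulOpposite.unop_smul, smul_assoc, map_smul]

/-- The left `A`-module structure on the `R`-linear dual of a right `A`-module
(i.e. an `Aᵐᵒᵖ`-module) `M`, given by `(a • f) m = f (aᵒᵖ • m)`. -/
instance dualModule' (M : Type) [AddCommGroup M] [Module R M] [Module Aᵐᵒᵖ M]
    [IsScalarTower R Aᵐᵒᵖ M] : Module A (M →ₗ[R] R) where
  smul a f := f.comp (actL R Aᵐᵒᵖ M (MulOpposite.op a))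
  one_smul f := by ext m; show f (MulOpposite.op (1 : A) • m) = f m; simp
  mul_smul a b f := by
    ext m
    show f (MulOpposite.op (a * b) • m) = f (MulOpposite.op b • MulOpposite.op a • m)
    rw [MulOpposite.op_mul, mul_smul]
  smul_zero a := rfl
  smul_add a f g := rfl
  add_smul a b f := by
    ext m
    show f (MulOpposite.op (a + b) • m) = f (MulOpposite.op a • m) + f (MulOpposite.op b • m)
    rw [MulOpposite.op_add, add_smul, map_add]
  zero_smul f := by ext m; show f (MulOpposite.op (0 : A) • m) = 0; simp

@[simp] lemma dualModule'_smul_apply (M : Type) [AddCommGroup M] [Module R M] [Module Aᵐᵒᵖ M]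
    [IsScalarTower R Aᵐᵒᵖ M] (a : A) (f : M →ₗ[R] R) (m : M) :
    (a • f) m = f (MulOpposite.op a • m) := rfl

instance dualTower' (M : Type) [AddCommGroup M] [Module R M] [Module Aᵐᵒᵖ M]
    [IsScalarTower R Aᵐᵒᵖ M] : IsScalarTower R A (M →ₗ[R] R) := by
  constructor
  intro r a f
  ext m
  show f (MulOpposite.op (r • a) • m) = r • f (MulOpposite.op a • m)
  rw [MulOpposite.op_smul, smul_assoc, map_smul]

variable (Λ : Type) [Fintype Λ] [PartialOrder Λ]

/-- Data witnessing that `X` is isomorphic to `Δ(λ) ⊗_R U` for some `λ ∈ S` and some finitely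
generated projective `R`-module `U`. -/
structure TensorFactor (Δ : Λ → Type) [∀ l, AddCommGroup (Δ l)] [∀ l, Module R (Δ l)]
    [∀ l, Module A (Δ l)] [∀ l, IsScalarTower R A (Δ l)]
    (S : Set Λ) (X : Type) [AddCommGroup X] [Module A X] : Type 1 where
  lam : Λ
  mem : lam ∈ S
  U : ModuleCat.{0} R
  fin : Module.Finite R U
  proj : Module.Projective R U
  iso : X ≃ₗ[A] (TensorProduct R (Δ lam) U)

/-- `M` belongs to `F(Δ̃_S)`: it is a finitely generated `A`-module with a finite filtration
whose factors are of the form `Δ(λ) ⊗_R U`, `λ ∈ S`, `U` a finitely generated projective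
`R`-module. -/
def InFilt (Δ : Λ → Type) [∀ l, AddCommGroup (Δ l)] [∀ l, Module R (Δ l)]
    [∀ l, Module A (Δ l)] [∀ l, IsScalarTower R A (Δ l)]
    (S : Set Λ) (M : Type) [AddCommGroup M] [Module A M] : Prop :=
  Module.Finite A M ∧
  ∃ (n : ℕ) (c : Fin (n + 1) → Submodule A M), c 0 = ⊥ ∧ c (Fin.last n) = ⊤ ∧ Monotone c ∧
    ∀ i : Fin n, Nonempty (TensorFactor R A Λ Δ S
      (↥(c i.succ) ⧸ (Submodule.comap (c i.succ).subtype (c i.castSucc))))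

/-- Data witnessing that `X` is isomorphic to `F(λ)` for some `λ ∈ S`. -/
structure PlainFactor (F : Λ → Type) [∀ l, AddCommGroup (F l)] [∀ l, Module A (F l)]
    (S : Set Λ) (X : Type) [AddCommGroup X] [Module A X] : Type 1 where
  lam : Λ
  mem : lam ∈ S
  iso : X ≃ₗ[A] F lam

/-- `M` has a finite filtration with factors among the modules `F(λ)`, `λ ∈ S`. -/
def InFiltPlain (F : Λ → Type) [∀ l, AddCommGroup (F l)] [∀ l, Module A (F l)]
    (S : Set Λ) (M : Type) [AddCommGroup M] [Module A M] : Prop :=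
  Module.Finite A M ∧
  ∃ (n : ℕ) (c : Fin (n + 1) → Submodule A M), c 0 = ⊥ ∧ c (Fin.last n) = ⊤ ∧ Monotone c ∧
    ∀ i : Fin n, Nonempty (PlainFactor A Λ F S
      (↥(c i.succ) ⧸ (Submodule.comap (c i.succ).subtype (c i.castSucc))))

/-- `X` is a direct summand of `Y` (as `A`-modules). -/
def IsDirectSummand (X Y : Type) [AddCommGroup X] [Module A X] [AddCommGroup Y]
    [Module A Y] : Prop :=
  ∃ (i : X →ₗ[A] Y) (p : Y →ₗ[A] X), p.comp i = LinearMap.id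

/-- `X` belongs to the additive closure `add T`. -/
def InAdd (T : Type) [AddCommGroup T] [Module A T] (X : Type) [AddCommGroup X]
    [Module A X] : Prop :=
  ∃ n : ℕ, IsDirectSummand A X (Fin n → T)

/-- A split quasi-hereditary structure on the `R`-algebra `A` with standard modules
`Δ(λ)`, `λ ∈ Λ` (following Rouquier's module-theoretic definition). -/
structure SplitQH (Δ : Λ → Type) [∀ l, AddCommGroup (Δ l)] [∀ l, Module R (Δ l)]
    [∀ l, Module A (Δ l)] [∀ l, IsScalarTower R A (Δ l)] : Type 1 where
  algFin : Module.Finite R A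
  algProj : Module.Projective R A
  deltaFinA : ∀ l, Module.Finite A (Δ l)
  deltaFinR : ∀ l, Module.Finite R (Δ l)
  deltaProjR : ∀ l, Module.Projective R (Δ l)
  hom_le : ∀ l m : Λ, (∃ f : Δ l →ₗ[A] Δ m, f ≠ 0) → l ≤ m
  endIso : ∀ l, Nonempty ((Module.End A (Δ l)) ≃ₐ[R] R)
  P : Λ → ModuleCat.{0} A
  P_proj : ∀ l, Module.Projective A (P l)
  P_fin : ∀ l, Module.Finite A (P l)
  epi : ∀ l, (P l : Type) →ₗ[A] Δ l
  epi_surj : ∀ l, Function.Surjective (epi l)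
  ker_filt : ∀ l, InFilt R A Λ Δ {m | l < m} ↥(LinearMap.ker (epi l))
  add_gen : ∀ (Q : ModuleCat.{0} A), Module.Finite A Q → Module.Projective A Q →
    InAdd A (∀ l, (P l : Type)) Q

/-- Vanishing of `Ext^i_A(M, N)` (computed in the abelian category of `A`-modules). -/
def extVanish (M : Type) [AddCommGroup M] [Module A M] (N : Type) [AddCommGroup N]
    [Module A N] (i : ℕ) : Prop :=
  Subsingleton (((Ext ℤ (ModuleCat.{0} A) i).obj
    (Opposite.op (ModuleCat.of A M))).obj (ModuleCat.of A N))

/-- `∇` is a family of costandard modules for the split quasi-hereditary algebra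
`(A, {Δ(λ)})`: the `R`-linear duals `D∇(λ)` make `A^op` split quasi-hereditary (with the same
poset), and the `Ext`-orthogonality relations with the standard modules hold. -/
def IsCostandard (Δ : Λ → Type) [∀ l, AddCommGroup (Δ l)] [∀ l, Module R (Δ l)]
    [∀ l, Module A (Δ l)] [∀ l, IsScalarTower R A (Δ l)]
    (N : Λ → Type) [∀ l, AddCommGroup (N l)] [∀ l, Module R (N l)]
    [∀ l, Module A (N l)] [∀ l, IsScalarTower R A (N l)] : Prop :=
  Nonempty (SplitQH R Aᵐᵒᵖ Λ (fun l => (N l →ₗ[R] R))) ∧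
  (∀ l, Nonempty ((Δ l →ₗ[A] N l) ≃ₗ[R] R)) ∧
  (∀ l m, l ≠ m → ∀ f : Δ l →ₗ[A] N m, f = 0) ∧
  (∀ l m : Λ, ∀ i : ℕ, 0 < i → extVanish A (Δ l) (N m) i)

/-- A bundled family of costandard modules. -/
structure CostandardFamily (Δ : Λ → Type) [∀ l, AddCommGroup (Δ l)] [∀ l, Module R (Δ l)]
    [∀ l, Module A (Δ l)] [∀ l, IsScalarTower R A (Δ l)] : Type 1 where
  Nab : Λ → Type
  [acg : ∀ l, AddCommGroup (Nab l)]
  [modR : ∀ l, Module R (Nab l)]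
  [modA : ∀ l, Module A (Nab l)]
  [tower : ∀ l, IsScalarTower R A (Nab l)]
  cost : IsCostandard R A Λ Δ Nab

attribute [instance] CostandardFamily.acg CostandardFamily.modR CostandardFamily.modA
  CostandardFamily.tower

/-- `T` is a family of (partial) tilting modules forming a characteristic tilting module
`⊕ T(λ)`: each `T(λ)` admits an exact sequence `0 → Δ(λ) → T(λ) → X(λ) → 0` with
`X(λ) ∈ F(Δ̃_{μ<λ})` and an exact sequence `0 → Y(λ) → T(λ) → ∇(λ) → 0` with
`Y(λ) ∈ F(∇̃_{μ<λ})`. -/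
def IsCharTilting (Δ : Λ → Type) [∀ l, AddCommGroup (Δ l)] [∀ l, Module R (Δ l)]
    [∀ l, Module A (Δ l)] [∀ l, IsScalarTower R A (Δ l)]
    (N : Λ → Type) [∀ l, AddCommGroup (N l)] [∀ l, Module R (N l)]
    [∀ l, Module A (N l)] [∀ l, IsScalarTower R A (N l)]
    (T : Λ → Type) [∀ l, AddCommGroup (T l)] [∀ l, Module A (T l)] : Prop :=
  ∀ l : Λ,
    (∃ f : Δ l →ₗ[A] T l, Function.Injective f ∧
      InFilt R A Λ Δ {m | m < l} ((T l) ⧸ LinearMap.range f)) ∧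
    (∃ g : T l →ₗ[A] N l, Function.Surjective g ∧
      InFilt R A Λ N {m | m < l} ↥(LinearMap.ker g))

end Core

end

section ExtOne

variable (R : Type) [CommRing R] (A : Type) [Ring A] [Algebra R A]

/-- Elementary form of the vanishing of `Ext¹_A(X, M)`: every map from the kernel of a
surjection `E → X` to `M` extends to `E`. -/
def ExtOneVanishes (X M : Type) [AddCommGroup X] [Module A X] [AddCommGroup M] [Module A M] :
    Prop :=
  ∀ (E : Type) [AddCommGroup E] [Module R E] [Module A E] [IsScalarTower R A E]
    (f : E →ₗ[A] X), Function.Surjective f → ∀ g : LinearMap.ker f →ₗ[A] M,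
      ∃ h : E →ₗ[A] M, ∀ x : LinearMap.ker f, h x = g x

variable {R A}

lemma LinearMap.exists_factor_of_ker_le {B C D : Type} [AddCommGroup B] [Module A B]
    [AddCommGroup C] [Module A C] [AddCommGroup D] [Module A D] (p : B →ₗ[A] C)
    (hp : Function.Surjective p) (k : B →ₗ[A] D) (hk : ∀ b, p b = 0 → k b = 0) :
    ∃ h : C →ₗ[A] D, ∀ b, h (p b) = k b := by
  refine ⟨((LinearMap.ker p).liftQ k fun b hb => hk b hb).comp
    (p.quotKerEquivOfSurjective hp).symm.toLinearMap, fun b => ?_⟩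
  have : (p.quotKerEquivOfSurjective hp).symm (p b) = Submodule.Quotient.mk b := by
    rw [LinearEquiv.symm_apply_eq]; rfl
  simp only [LinearMap.comp_apply, LinearEquiv.coe_coe, this]
  exact (LinearMap.ker p).liftQ_apply k b

lemma LinearMap.exists_factor_of_injective {B C D : Type} [AddCommGroup B] [Module A B]
    [AddCommGroup C] [Module A C] [AddCommGroup D] [Module A D] (i : B →ₗ[A] C)
    (hi : Function.Injective i) (k : D →ₗ[A] C) (hk : ∀ d, k d ∈ LinearMap.range i) :
    ∃ h : D →ₗ[A] B, ∀ d, i (h d) = k d := by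
  refine ⟨(LinearEquiv.ofInjective i hi).symm.toLinearMap.comp (k.codRestrict _ hk),
    fun d => ?_⟩
  exact congrArg Subtype.val
    ((LinearEquiv.ofInjective i hi).apply_symm_apply (k.codRestrict _ hk d))

lemma ExtOneVanishes.of_presentation {P X M : Type} [AddCommGroup P] [Module A P]
    [AddCommGroup X] [Module A X] [AddCommGroup M] [Module A M] [Module.Projective A P]
    (q : P →ₗ[A] X) (hq : Function.Surjective q)
    (hext : ∀ g : LinearMap.ker q →ₗ[A] M, ∃ h : P →ₗ[A] M, ∀ x : LinearMap.ker q, h x = g x) :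
    ExtOneVanishes R A X M := by
  intro E _ _ _ _ f hf g
  obtain ⟨s, hs⟩ := Module.projective_lifting_property f q hf
  have hs' : ∀ p, f (s p) = q p := fun p => LinearMap.congr_fun hs p
  obtain ⟨h, hh⟩ := hext (g.comp (s.restrict (p := LinearMap.ker q) (q := LinearMap.ker f)
    fun x hx => by simpa [hs'] using hx))
  obtain ⟨k, hk⟩ := LinearMap.exists_factor_of_ker_le
    ((LinearMap.ker f).subtype.coprod s)
    (fun e => by
      obtain ⟨p, hp⟩ := hq (f e)
      exact ⟨(⟨e - s p, by simp [hs', hp]⟩, p), by simp⟩)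
    (g.coprod h) (by
      rintro ⟨n, p⟩ hnp
      have h1 : (n : E) + s p = 0 := by simpa using hnp
      have hp : p ∈ LinearMap.ker q := by
        have := congrArg f h1
        simpa [hs'] using this
      have h2 := hh ⟨p, hp⟩
      have h3 : (s.restrict (p := LinearMap.ker q) (q := LinearMap.ker f)
          fun x hx => by simpa [hs'] using hx) ⟨p, hp⟩ = -n := by
        apply Subtype.ext
        simpa using (eq_neg_of_add_eq_zero_right h1)
      simp only [LinearMap.comp_apply, h3, map_neg] at h2
      simp [h2])
  exact ⟨k, fun x => by simpa using hk (x, 0)⟩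

lemma extVanish.extOneVanishes {X M : Type} [AddCommGroup X] [Module A X]
    [AddCommGroup M] [Module A M] (h : extVanish A X M 1) : ExtOneVanishes R A X M := by
  let P := projectiveResolution (ModuleCat.of A X)
  have e := P.isoExt (R := ℤ) 1 (ModuleCat.of A M)
  have hz : Limits.IsZero ((P.complex.linearYonedaObj ℤ (ModuleCat.of A M)).homology 1) := by
    refine Limits.IsZero.of_iso ?_ e.symm
    have := h
    rw [extVanish] at this
    exact ModuleCat.isZero_of_subsingleton _
  rw [← HomologicalComplex.exactAt_iff_isZero_homology,
    HomologicalComplex.exactAt_iff' _ 0 1 2 (by simp) (by simp),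
    ShortComplex.moduleCat_exact_iff] at hz
  have hz' : ∀ x : P.complex.X 1 ⟶ ModuleCat.of A M, P.complex.d 2 1 ≫ x = 0 →
      ∃ y : P.complex.X 0 ⟶ ModuleCat.of A M, P.complex.d 1 0 ≫ y = x := fun x hx => hz x hx
  have hP0 : Module.Projective A (P.complex.X 0) :=
    (IsProjective.iff_projective _).2 (P.projective 0)
  have hsurj : Function.Surjective (P.π.f 0).hom :=
    (ModuleCat.epi_iff_surjective _).1 inferInstance
  have hex0 := P.exact₀
  rw [ShortComplex.moduleCat_exact_iff] at hex0
  have hex0' : ∀ x : P.complex.X 0, (P.π.f 0).hom x = 0 →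
    ∃ y : P.complex.X 1, (P.complex.d 1 0).hom y = x := fun x hx => hex0 x hx
  refine ExtOneVanishes.of_presentation (P := P.complex.X 0) (P.π.f 0).hom hsurj fun g => ?_
  have hd : ∀ y, (P.complex.d 1 0).hom y ∈ LinearMap.ker (P.π.f 0).hom := fun y =>
    congrArg (fun t => (ModuleCat.Hom.hom t) y) P.complex_d_comp_π_f_zero
  obtain ⟨y, hy⟩ := hz' (ModuleCat.ofHom (g.comp ((P.complex.d 1 0).hom.codRestrict _ hd))) (by
    ext t
    have : (P.complex.d 1 0).hom.codRestrict _ hd ((P.complex.d 2 1).hom t) = 0 := by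
      apply Subtype.ext
      exact congrArg (fun s => (ModuleCat.Hom.hom s) t) (P.complex.d_comp_d 2 1 0)
    exact (congrArg g this).trans (map_zero g))
  refine ⟨y.hom, ?_⟩
  rintro ⟨x, hx⟩
  obtain ⟨z, rfl⟩ := hex0' x hx
  exact congrArg (fun t => t.hom z) hy

end ExtOne

section HomTensor

set_option linter.unusedSectionVars false

variable {R : Type} [CommRing R] {A : Type} [Ring A] [Algebra R A]
variable {X : Type} [AddCommGroup X] [Module R X] [Module A X] [IsScalarTower R A X]
variable {X' : Type} [AddCommGroup X'] [Module R X'] [Module A X'] [IsScalarTower R A X']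
variable {X'' : Type} [AddCommGroup X''] [Module R X''] [Module A X''] [IsScalarTower R A X'']
variable {M : Type} [AddCommGroup M] [Module R M] [Module A M] [IsScalarTower R A M]
variable {D : Type} [AddCommGroup D] [Module R D] [Module A D] [IsScalarTower R A D]
variable {U : Type} [AddCommGroup U] [Module R U]

/-- Tensor-hom adjunction: a family of `A`-linear maps `X → M` indexed `R`-linearly by `U` is
an `A`-linear map `X ⊗ U → M`. -/
noncomputable def tensorUncurry (F : U →ₗ[R] (X →ₗ[A] M)) : X ⊗[R] U →ₗ[A] M :=
  TensorProduct.AlgebraTensorModule.lift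
    { toFun := fun x =>
        { toFun := fun u => F u x
          map_add' := fun u v => by simp
          map_smul' := fun r u => by simp }
      map_add' := fun x y => by ext u; simp
      map_smul' := fun a x => by ext u; simp }

@[simp] lemma tensorUncurry_tmul (F : U →ₗ[R] (X →ₗ[A] M)) (x : X) (u : U) :
    tensorUncurry F (x ⊗ₜ u) = F u x := by
  simp [tensorUncurry]

/-- The inverse of `tensorUncurry`. -/
noncomputable def tensorCurry (f : X ⊗[R] U →ₗ[A] M) : U →ₗ[R] (X →ₗ[A] M) where
  toFun u :=
    { toFun := fun x => f (x ⊗ₜ u)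
      map_add' := fun x y => by simp [TensorProduct.add_tmul]
      map_smul' := fun a x => by simp [← TensorProduct.smul_tmul'] }
  map_add' u v := by ext x; simp [TensorProduct.tmul_add]
  map_smul' r u := by
    ext x
    simp

@[simp] lemma tensorCurry_apply (f : X ⊗[R] U →ₗ[A] M) (x : X) (u : U) :
    tensorCurry f u x = f (x ⊗ₜ u) := rfl

lemma tensor_hom_ext {f g : X ⊗[R] U →ₗ[A] M} (h : ∀ x u, f (x ⊗ₜ u) = g (x ⊗ₜ u)) : f = g :=
  TensorProduct.AlgebraTensorModule.ext h

variable (R A X U M) in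
/-- Tensor-hom adjunction as an `R`-linear equivalence. -/
noncomputable def tensorCurryEquiv : (X ⊗[R] U →ₗ[A] M) ≃ₗ[R] (U →ₗ[R] (X →ₗ[A] M)) where
  toFun := tensorCurry
  invFun := tensorUncurry
  left_inv f := tensor_hom_ext fun x u => by simp
  right_inv F := by ext u x; simp
  map_add' f g := by ext; simp
  map_smul' r f := by ext; simp

variable (M) in
/-- Precomposition with an `A`-linear map, as an `R`-linear map of Hom modules. -/
def homPrecomp (i : X →ₗ[A] X') : (X' →ₗ[A] M) →ₗ[R] (X →ₗ[A] M) where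
  toFun f := f.comp i
  map_add' _ _ := rfl
  map_smul' _ _ := rfl

@[simp] lemma homPrecomp_apply (i : X →ₗ[A] X') (f : X' →ₗ[A] M) :
    homPrecomp (R := R) M i f = f.comp i := rfl

variable (D) in
/-- Postcomposition with an `A`-linear map, as an `R`-linear map of Hom modules. -/
def homPostcomp (i : X →ₗ[A] X') : (D →ₗ[A] X) →ₗ[R] (D →ₗ[A] X') where
  toFun f := i.comp f
  map_add' f g := by ext; simp
  map_smul' r f := by
    ext x
    simp

@[simp] lemma homPostcomp_apply (i : X →ₗ[A] X') (f : D →ₗ[A] X) :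
    homPostcomp (R := R) D i f = i.comp f := rfl

lemma ExtOneVanishes.of_exact {X X' X'' M : Type} [AddCommGroup X] [Module A X]
    [AddCommGroup X'] [Module A X'] [AddCommGroup X''] [Module A X''] [AddCommGroup M]
    [Module A M] {i : X' →ₗ[A] X} {p : X →ₗ[A] X''}
    (hi : Function.Injective i) (hip : Function.Exact i p) (hp : Function.Surjective p)
    (h' : ExtOneVanishes R A X' M) (h'' : ExtOneVanishes R A X'' M) :
    ExtOneVanishes R A X M := by
  intro E _ _ _ _ f hf g
  obtain ⟨f', hf'⟩ := LinearMap.exists_factor_of_injective i hi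
    (f.comp (LinearMap.ker (p.comp f)).subtype) fun d => (hip _).1 d.2
  have hf's : Function.Surjective f' := fun x' => by
    obtain ⟨e, he⟩ := hf (i x')
    refine ⟨⟨e, ?_⟩, hi ?_⟩
    · simpa [he] using hip.apply_apply_eq_zero x'
    · rw [hf']; exact he
  have hk : ∀ e : LinearMap.ker f', f e = 0 := fun e => by
    have := hf' e
    rw [e.2, map_zero] at this
    exact this.symm
  obtain ⟨k, hkk⟩ := h' _ f' hf's (g.comp
    (((LinearMap.ker (p.comp f)).subtype.comp (LinearMap.ker f').subtype).codRestrict _ hk))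
  obtain ⟨h, hh⟩ := h'' E (p.comp f) (hp.comp hf) k
  refine ⟨h, fun x => ?_⟩
  have h1 : (x : E) ∈ LinearMap.ker (p.comp f) := by
    simp
  have h2 : (⟨x, h1⟩ : LinearMap.ker (p.comp f)) ∈ LinearMap.ker f' := by
    apply hi
    rw [hf', map_zero]
    exact x.2
  rw [hh ⟨x, h1⟩, hkk ⟨_, h2⟩]
  rfl

lemma homPrecomp_surjective {i : X' →ₗ[A] X} {p : X →ₗ[A] X''}
    (hi : Function.Injective i) (hip : Function.Exact i p) (hp : Function.Surjective p)
    (h'' : ExtOneVanishes R A X'' M) :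
    Function.Surjective (homPrecomp (R := R) M i) := by
  intro g
  obtain ⟨s, hs⟩ := LinearMap.exists_factor_of_injective i hi (LinearMap.ker p).subtype
    fun d => (hip _).1 d.2
  obtain ⟨h, hh⟩ := h'' X p hp (g.comp s)
  refine ⟨h, LinearMap.ext fun x => ?_⟩
  have := hh ⟨i x, hip.apply_apply_eq_zero x⟩
  simp only [LinearMap.comp_apply] at this
  simp only [homPrecomp_apply, LinearMap.comp_apply, this]
  congr 1
  apply hi
  rw [hs]; rfl

variable (U) in
/-- The functor `- ⊗ U` on `A`-linear maps. -/
noncomputable def tensorMap (i : X →ₗ[A] X') : X ⊗[R] U →ₗ[A] X' ⊗[R] U :=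
  tensorUncurry
    { toFun := fun u => (tensorCurry LinearMap.id u).comp i
      map_add' := fun u v => by ext; simp
      map_smul' := fun r u => by ext; simp }

@[simp] lemma tensorMap_tmul (i : X →ₗ[A] X') (x : X) (u : U) :
    tensorMap U i (x ⊗ₜ[R] u) = i x ⊗ₜ u := by
  simp [tensorMap]

lemma tensorMap_apply (i : X →ₗ[A] X') (t : X ⊗[R] U) :
    tensorMap U i t = (i.restrictScalars R).rTensor U t := by
  induction t with
  | zero => simp
  | tmul x u => simp
  | add s t hs ht => simp only [map_add, hs, ht]

lemma tensorMap_surjective {p : X →ₗ[A] X''} (hp : Function.Surjective p) :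
    Function.Surjective (tensorMap (R := R) U p) := fun t => by
  obtain ⟨s, hs⟩ := LinearMap.rTensor_surjective U (g := p.restrictScalars R) hp t
  exact ⟨s, by rw [tensorMap_apply, hs]⟩

lemma tensorMap_exact {i : X' →ₗ[A] X} {p : X →ₗ[A] X''} (hip : Function.Exact i p)
    (hp : Function.Surjective p) :
    Function.Exact (tensorMap (R := R) U i) (tensorMap (R := R) U p) := fun t => by
  have := rTensor_exact U (f := i.restrictScalars R) (g := p.restrictScalars R) hip hp t
  simpa only [tensorMap_apply, Set.mem_range] using this

lemma ExtOneVanishes.tensor_of_presentation {P : Type} [AddCommGroup P] [Module R P]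
    [Module A P] [IsScalarTower R A P] [Module.Projective A P] [Module.Projective R U]
    (q : P →ₗ[A] D) (hq : Function.Surjective q) (h : ExtOneVanishes R A D M) :
    ExtOneVanishes R A (D ⊗[R] U) M := by
  have hex := tensorMap_exact (R := R) (U := U) q.exact_subtype_ker_map hq
  refine ExtOneVanishes.of_presentation (tensorMap U q) (tensorMap_surjective hq) fun g => ?_
  let j : (LinearMap.ker q) ⊗[R] U →ₗ[A] LinearMap.ker (tensorMap (R := R) U q) :=
    (tensorMap U (LinearMap.ker q).subtype).codRestrict _ fun t => hex.apply_apply_eq_zero t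
  have hj : Function.Surjective j := fun ⟨t, ht⟩ => by
    obtain ⟨s, hs⟩ := (hex t).1 ht
    exact ⟨s, Subtype.ext hs⟩
  obtain ⟨F, hF⟩ := Module.projective_lifting_property
    (homPrecomp (R := R) M (LinearMap.ker q).subtype) (tensorCurry (g.comp j)) (fun k => by
      obtain ⟨l, hl⟩ := h _ q hq k
      exact ⟨l, LinearMap.ext hl⟩)
  have key : (tensorUncurry F).comp (tensorMap U (LinearMap.ker q).subtype) = g.comp j :=
    tensor_hom_ext fun x u => by
      simpa using LinearMap.congr_fun (LinearMap.congr_fun hF u) x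
  refine ⟨tensorUncurry F, fun x => ?_⟩
  obtain ⟨t, rfl⟩ := hj x
  exact LinearMap.congr_fun key t

lemma ExtOneVanishes.tensor [Module.Projective R U] (h : ExtOneVanishes R A D M) :
    ExtOneVanishes R A (D ⊗[R] U) M :=
  ExtOneVanishes.tensor_of_presentation (P := D →₀ A) (Finsupp.linearCombination A id)
    (Finsupp.linearCombination_id_surjective A D) h

variable (R) in
/-- Finitely generated projective modules. -/
def IsFinProj (V : Type) [AddCommGroup V] [Module R V] : Prop :=
  Module.Finite R V ∧ Module.Projective R V

lemma IsFinProj.of_retract {V W : Type} [AddCommGroup V] [Module R V] [AddCommGroup W]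
    [Module R W] (hW : IsFinProj R W) (i : V →ₗ[R] W) (p : W →ₗ[R] V)
    (h : p.comp i = LinearMap.id) : IsFinProj R V := by
  obtain ⟨_, _⟩ := hW
  exact ⟨Module.Finite.of_surjective p fun v => ⟨i v, LinearMap.congr_fun h v⟩,
    Module.Projective.of_split i p h⟩

lemma IsFinProj.of_equiv {V W : Type} [AddCommGroup V] [Module R V] [AddCommGroup W]
    [Module R W] (hW : IsFinProj R W) (e : V ≃ₗ[R] W) : IsFinProj R V :=
  hW.of_retract e.toLinearMap e.symm.toLinearMap (by ext; simp)

section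

variable {V V' V'' : Type} [AddCommGroup V] [Module R V] [AddCommGroup V'] [Module R V']
  [AddCommGroup V''] [Module R V''] {i : V' →ₗ[R] V} {p : V →ₗ[R] V''}

lemma IsFinProj.exists_equiv_prod (hi : Function.Injective i) (hip : Function.Exact i p)
    (hp : Function.Surjective p) (h'' : Module.Projective R V'') :
    Nonempty (V ≃ₗ[R] V' × V'') := by
  obtain ⟨s, hs⟩ := p.exists_rightInverse_of_surjective (LinearMap.range_eq_top.2 hp)
  exact ⟨(hip.splitSurjectiveEquiv hi ⟨s, hs⟩).1⟩

lemma IsFinProj.of_exact (hi : Function.Injective i) (hip : Function.Exact i p)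
    (hp : Function.Surjective p) (h' : IsFinProj R V') (h'' : IsFinProj R V'') :
    IsFinProj R V := by
  obtain ⟨_, _⟩ := h'
  obtain ⟨_, _⟩ := h''
  obtain ⟨e⟩ := exists_equiv_prod hi hip hp inferInstance
  exact IsFinProj.of_equiv ⟨inferInstance, inferInstance⟩ e

lemma IsFinProj.left_of_exact (hi : Function.Injective i) (hip : Function.Exact i p)
    (hp : Function.Surjective p) (h : IsFinProj R V) (h'' : IsFinProj R V'') :
    IsFinProj R V' := by
  obtain ⟨_, _⟩ := h''
  obtain ⟨e⟩ := exists_equiv_prod hi hip hp inferInstance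
  exact h.of_retract (e.symm.toLinearMap.comp (LinearMap.inl R V' V''))
    ((LinearMap.fst R V' V'').comp e.toLinearMap) (by ext; simp)

end

lemma IsFinProj.linearMap {V W : Type} [AddCommGroup V] [Module R V] [AddCommGroup W]
    [Module R W] (hV : IsFinProj R V) (hW : IsFinProj R W) : IsFinProj R (V →ₗ[R] W) := by
  obtain ⟨_, _⟩ := hV
  obtain ⟨_, _⟩ := hW
  exact IsFinProj.of_equiv (W := Module.Dual R V ⊗[R] W) ⟨inferInstance, inferInstance⟩
    (dualTensorHomEquiv R V W).symm

lemma homPrecomp_injective_of_surjective {p : X →ₗ[A] X''} (hp : Function.Surjective p) :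
    Function.Injective (homPrecomp (R := R) M p) := fun f g hfg => LinearMap.ext fun x => by
  obtain ⟨y, rfl⟩ := hp x
  exact LinearMap.congr_fun hfg y

lemma homPrecomp_exact {i : X' →ₗ[A] X} {p : X →ₗ[A] X''} (hip : Function.Exact i p)
    (hp : Function.Surjective p) :
    Function.Exact (homPrecomp (R := R) M p) (homPrecomp (R := R) M i) := by
  intro f
  constructor
  · intro hf
    obtain ⟨h, hh⟩ := LinearMap.exists_factor_of_ker_le p hp f fun b hb => by
      obtain ⟨x, rfl⟩ := (hip b).1 hb
      exact LinearMap.congr_fun hf x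
    exact ⟨h, LinearMap.ext hh⟩
  · rintro ⟨h, rfl⟩
    ext x
    simp [hip.apply_apply_eq_zero x]

/-- A finitely generated projective module has a finite dual basis. -/
lemma IsFinProj.exists_dual_basis (hU : IsFinProj R U) :
    ∃ (n : ℕ) (a : Fin n → U →ₗ[R] R) (b : Fin n → U), ∀ u, u = ∑ i, a i u • b i := by
  obtain ⟨_, _⟩ := hU
  obtain ⟨n, f, g, -, -, hfg⟩ := Module.Finite.exists_comp_eq_id_of_projective R U
  refine ⟨n, fun i => (LinearMap.proj i).comp g, fun i => f (Pi.single i 1), fun u => ?_⟩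
  conv_lhs => rw [← LinearMap.id_apply (R := R) u, ← hfg, LinearMap.comp_apply,
    pi_eq_sum_univ' (g u), map_sum]
  simp only [map_smul]
  rfl

variable (A D) in
/-- Contraction of `D ⊗ U` along a functional on `U`. -/
noncomputable def tensorContract (φ : U →ₗ[R] R) : D ⊗[R] U →ₗ[A] D :=
  tensorUncurry
    { toFun := fun u => φ u • LinearMap.id
      map_add' := fun u v => by simp [add_smul]
      map_smul' := fun r u => by simp [mul_smul] }

@[simp] lemma tensorContract_tmul (φ : U →ₗ[R] R) (d : D) (u : U) :
    tensorContract A D φ (d ⊗ₜ u) = φ u • d := by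
  simp [tensorContract]

lemma tensor_eq_sum_contract {n : ℕ} {a : Fin n → U →ₗ[R] R} {b : Fin n → U}
    (hab : ∀ u, u = ∑ i, a i u • b i) (t : D ⊗[R] U) :
    t = ∑ i, tensorContract A D (a i) t ⊗ₜ[R] b i := by
  induction t with
  | zero => simp
  | tmul d u =>
    conv_lhs => rw [hab u, TensorProduct.tmul_sum]
    simp [TensorProduct.smul_tmul]
  | add s t hs ht =>
    conv_lhs => rw [hs, ht]
    simp [TensorProduct.add_tmul, Finset.sum_add_distrib]

lemma hom_from_tensor_eq_zero (h : ∀ f : D →ₗ[A] M, f = 0) (f : D ⊗[R] U →ₗ[A] M) : f = 0 :=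
  tensor_hom_ext fun x u => by
    simpa using LinearMap.congr_fun (h (tensorCurry f u)) x

lemma hom_to_tensor_eq_zero (hU : IsFinProj R U) {Y : Type} [AddCommGroup Y] [Module A Y]
    (h : ∀ f : Y →ₗ[A] D, f = 0) (f : Y →ₗ[A] D ⊗[R] U) : f = 0 := by
  obtain ⟨n, a, b, hab⟩ := hU.exists_dual_basis
  ext y
  rw [tensor_eq_sum_contract (A := A) hab (f y)]
  refine Finset.sum_eq_zero fun i _ => ?_
  have := LinearMap.congr_fun (h ((tensorContract A D (a i)).comp f)) y
  simp only [LinearMap.comp_apply, LinearMap.zero_apply] at this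
  rw [this, TensorProduct.zero_tmul]

variable (R A) in
/-- The evaluation map `D ⊗ Hom_A(D, X) → X`. -/
noncomputable def evalTensor (D X : Type) [AddCommGroup D] [Module R D] [Module A D]
    [IsScalarTower R A D] [AddCommGroup X] [Module R X] [Module A X] [IsScalarTower R A X] :
    D ⊗[R] (D →ₗ[A] X) →ₗ[A] X := tensorUncurry LinearMap.id

@[simp] lemma evalTensor_tmul (d : D) (f : D →ₗ[A] X) : evalTensor R A D X (d ⊗ₜ f) = f d := by
  simp [evalTensor]

lemma evalTensor_naturality (i : X →ₗ[A] X') (t : D ⊗[R] (D →ₗ[A] X)) :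
    evalTensor R A D X' ((homPostcomp (R := R) D i).lTensor D t) =
      i (evalTensor R A D X t) := by
  induction t with
  | zero => simp
  | tmul d u => simp
  | add s t hs ht => simp [hs, ht]

/-- If all endomorphisms of `D` are given by unique scalars, then `U ≃ Hom_A(D, D ⊗ U)`. -/
lemma exists_equiv_hom_tensor (hU : IsFinProj R U) (hD : ∀ f : D →ₗ[A] D, ∃ r : R, ∀ x, f x = r • x)
    (hD' : ∀ r : R, (∀ x : D, r • x = 0) → r = 0) :
    ∃ e : U ≃ₗ[R] (D →ₗ[A] D ⊗[R] U), ∀ u d, e u d = d ⊗ₜ u := by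
  obtain ⟨n, a, b, hab⟩ := hU.exists_dual_basis
  refine ⟨LinearEquiv.ofBijective (tensorCurry LinearMap.id) ⟨?_, ?_⟩, fun u d => rfl⟩
  · rw [injective_iff_map_eq_zero]
    intro u hu
    rw [hab u]
    refine Finset.sum_eq_zero fun i _ => ?_
    rw [hD' (a i u) fun x => ?_, zero_smul]
    have := congrArg (tensorContract A D (a i)) (LinearMap.congr_fun hu x)
    simpa using this
  · intro f
    choose r hr using fun i => hD ((tensorContract A D (a i)).comp f)
    refine ⟨∑ i, r i • b i, LinearMap.ext fun x => ?_⟩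
    rw [tensor_eq_sum_contract (A := A) hab (f x)]
    simp only [LinearMap.comp_apply] at hr
    simp [hr, TensorProduct.smul_tmul]

lemma evalTensor_bijective_tensor (hU : IsFinProj R U)
    (hD : ∀ f : D →ₗ[A] D, ∃ r : R, ∀ x, f x = r • x)
    (hD' : ∀ r : R, (∀ x : D, r • x = 0) → r = 0) :
    Function.Bijective (evalTensor R A D (D ⊗[R] U)) := by
  obtain ⟨e, he⟩ := exists_equiv_hom_tensor hU hD hD'
  have h1 : ∀ t, evalTensor R A D (D ⊗[R] U) (e.lTensor D t) = t := fun t => by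
    induction t with
    | zero => simp
    | tmul d u => simp [he]
    | add s t hs ht => simp only [map_add, hs, ht]
  have h2 : ⇑(evalTensor R A D (D ⊗[R] U)) = ⇑(e.lTensor D).symm := by
    funext s
    obtain ⟨t, rfl⟩ := (e.lTensor D).surjective s
    rw [h1, LinearEquiv.symm_apply_apply]
  rw [h2]
  exact (e.lTensor D).symm.bijective

end HomTensor

section Good

set_option linter.unusedSectionVars false

variable {R : Type} [CommRing R] {A : Type} [Ring A] [Algebra R A]
variable {Λ : Type} [Fintype Λ] [PartialOrder Λ]
variable {Δ : Λ → Type} [∀ l, AddCommGroup (Δ l)] [∀ l, Module R (Δ l)]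
  [∀ l, Module A (Δ l)] [∀ l, IsScalarTower R A (Δ l)]

/-- Induction principle along a `Δ̃`-filtration. -/
theorem InFilt.induction {S : Set Λ}
    {Q : ∀ (X : Type) [AddCommGroup X] [Module R X] [Module A X] [IsScalarTower R A X], Prop}
    (zero : ∀ (X : Type) [AddCommGroup X] [Module R X] [Module A X] [IsScalarTower R A X],
      Subsingleton X → Q X)
    (equiv : ∀ (X Y : Type) [AddCommGroup X] [Module R X] [Module A X] [IsScalarTower R A X]
      [AddCommGroup Y] [Module R Y] [Module A Y] [IsScalarTower R A Y], (X ≃ₗ[A] Y) → Q X → Q Y)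
    (ext : ∀ (X : Type) [AddCommGroup X] [Module R X] [Module A X] [IsScalarTower R A X]
      (N : Submodule A X), Q N → Q (X ⧸ N) → Q X)
    (tensor : ∀ l ∈ S, ∀ (U : Type) [AddCommGroup U] [Module R U], IsFinProj R U →
      Q (Δ l ⊗[R] U))
    {X : Type} [AddCommGroup X] [Module R X] [Module A X] [IsScalarTower R A X]
    (hX : InFilt R A Λ Δ S X) : Q X := by
  obtain ⟨-, n, c, h0, hn, hc, hf⟩ := hX
  have key : ∀ i : Fin (n + 1), Q (c i) := fun i => by
    induction i using Fin.induction with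
    | zero => exact zero _ (by rw [h0]; infer_instance)
    | succ i ih =>
      obtain ⟨T⟩ := hf i
      have hle : c i.castSucc ≤ c i.succ := hc (Fin.castSucc_le_succ i)
      exact ext _ ((c i.castSucc).comap (c i.succ).subtype)
        (equiv _ _ (Submodule.comapSubtypeEquivOfLe hle).symm ih)
        (equiv _ _ T.iso.symm (tensor _ T.mem T.U ⟨T.fin, T.proj⟩))
  have := key (Fin.last n)
  rw [hn] at this
  exact equiv _ _ Submodule.topEquiv this

variable (R A Δ) in
/-- `X` is filtered by the images of the evaluation maps `Δ(l) ⊗ Hom(Δ(l), -) → -`, taken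
successively for the elements `l` of the list. -/
def IsGood : List Λ → ∀ (X : Type) [AddCommGroup X] [Module R X] [Module A X]
    [IsScalarTower R A X], Prop
  | [], X, _, _, _, _ => Subsingleton X
  | l :: L, X, _, _, _, _ => IsFinProj R (Δ l →ₗ[A] X) ∧
      Function.Injective (evalTensor R A (Δ l) X) ∧
      IsGood L (X ⧸ LinearMap.range (evalTensor R A (Δ l) X))

lemma IsGood.of_retract {X Y : Type} [AddCommGroup X] [Module R X] [Module A X]
    [IsScalarTower R A X] [AddCommGroup Y] [Module R Y] [Module A Y] [IsScalarTower R A Y]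
    {L : List Λ} (hY : IsGood R A Δ L Y) (i : X →ₗ[A] Y) (p : Y →ₗ[A] X)
    (hpi : ∀ x, p (i x) = x) : IsGood R A Δ L X := by
  induction L generalizing X Y with
  | nil =>
    have : Subsingleton Y := hY
    exact (Function.LeftInverse.injective hpi).subsingleton
  | cons l L ih =>
    obtain ⟨h1, h2, h3⟩ := hY
    have hi : ∀ x ∈ LinearMap.range (evalTensor R A (Δ l) X),
        i x ∈ LinearMap.range (evalTensor R A (Δ l) Y) := by
      rintro _ ⟨t, rfl⟩
      exact ⟨_, evalTensor_naturality i t⟩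
    have hp : ∀ x ∈ LinearMap.range (evalTensor R A (Δ l) Y),
        p x ∈ LinearMap.range (evalTensor R A (Δ l) X) := by
      rintro _ ⟨t, rfl⟩
      exact ⟨_, evalTensor_naturality p t⟩
    have hcomp : (homPostcomp (R := R) (Δ l) p).comp (homPostcomp (Δ l) i) = LinearMap.id := by
      ext f x
      simp [hpi]
    refine ⟨h1.of_retract _ _ hcomp, ?_, ih h3 (Submodule.mapQ _ _ i hi)
      (Submodule.mapQ _ _ p hp) ?_⟩
    · rw [injective_iff_map_eq_zero]
      intro t ht
      have h4 := evalTensor_naturality i t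
      rw [ht, map_zero, ← map_zero (evalTensor R A (Δ l) Y)] at h4
      have h5 := congrArg ((homPostcomp (R := R) (Δ l) p).lTensor (Δ l)) (h2 h4)
      rwa [← LinearMap.comp_apply, ← LinearMap.lTensor_comp, hcomp, LinearMap.lTensor_id,
        map_zero, LinearMap.id_apply] at h5
    · intro x
      induction x using Submodule.Quotient.induction_on with
      | H x => simp [Submodule.mapQ_apply, hpi]

lemma IsGood.of_equiv {X Y : Type} [AddCommGroup X] [Module R X] [Module A X]
    [IsScalarTower R A X] [AddCommGroup Y] [Module R Y] [Module A Y] [IsScalarTower R A Y]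
    {L : List Λ} (hY : IsGood R A Δ L Y) (e : X ≃ₗ[A] Y) : IsGood R A Δ L X :=
  hY.of_retract e.toLinearMap e.symm.toLinearMap (by simp)

lemma IsFinProj.of_subsingleton (V : Type) [AddCommGroup V] [Module R V] [Subsingleton V] :
    IsFinProj R V := ⟨inferInstance, inferInstance⟩

lemma IsGood.of_subsingleton (L : List Λ) (X : Type) [AddCommGroup X] [Module R X] [Module A X]
    [IsScalarTower R A X] [Subsingleton X] : IsGood R A Δ L X := by
  induction L generalizing X with
  | nil => assumption
  | cons l L ih =>
    have : Subsingleton (Δ l →ₗ[A] X) := ⟨fun f g => by ext; apply Subsingleton.elim⟩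
    refine ⟨IsFinProj.of_subsingleton _, ?_, ih _⟩
    have h0 : ∀ t : Δ l ⊗[R] (Δ l →ₗ[A] X), t = 0 := fun t => by
      induction t with
      | zero => rfl
      | tmul d u => rw [Subsingleton.elim u 0, TensorProduct.tmul_zero]
      | add s t hs ht => simp [hs, ht]
    exact fun s t _ => by rw [h0 s, h0 t]

/-- The list is ordered compatibly with the reverse of the partial order, without repetitions. -/
def IsDescending (L : List Λ) : Prop := L.Pairwise fun a b => a ≠ b ∧ ¬ a < b

lemma IsDescending.notMem_of_lt {l m : Λ} {L : List Λ} (hL : IsDescending (l :: L)) (h : l < m) :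
    m ∉ l :: L := by
  rintro hm
  rcases List.mem_cons.1 hm with rfl | hm
  · exact lt_irrefl _ h
  · exact ((List.pairwise_cons.1 hL).1 m hm).2 h

lemma IsDescending.tail {l : Λ} {L : List Λ} (hL : IsDescending (l :: L)) : IsDescending L :=
  (List.pairwise_cons.1 hL).2

lemma exists_isDescending : ∃ L : List Λ, IsDescending L ∧ ∀ l, l ∈ L := by
  classical
  suffices ∀ s : Finset Λ, ∃ L : List Λ, IsDescending L ∧ ∀ l, l ∈ L ↔ l ∈ s by
    obtain ⟨L, h1, h2⟩ := this Finset.univ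
    exact ⟨L, h1, fun l => (h2 l).2 (Finset.mem_univ l)⟩
  intro s
  induction s using Finset.strongInduction with
  | H s ih =>
    rcases s.eq_empty_or_nonempty with rfl | hs
    · exact ⟨[], List.Pairwise.nil, by simp⟩
    · obtain ⟨m, hm⟩ := s.exists_maximal hs
      obtain ⟨L, h1, h2⟩ := ih _ (Finset.erase_ssubset hm.1)
      refine ⟨m :: L, List.pairwise_cons.2 ⟨fun a ha => ?_, h1⟩, fun l => ?_⟩
      · have := Finset.mem_erase.1 ((h2 a).1 ha)
        exact ⟨this.1.symm, hm.not_gt this.2⟩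
      · by_cases h : l = m
        · simp [h, hm.1]
        · simp [h2, h]

namespace SplitQH

variable (h : SplitQH R A Λ Δ)

/-- The projective modules `P(l)` as `R`-modules. -/
noncomputable instance (l : Λ) : Module R (h.P l) := Module.compHom _ (algebraMap R A)

instance (l : Λ) : IsScalarTower R A (h.P l) :=
  ⟨fun r a x => by rw [Algebra.smul_def, mul_smul]; rfl⟩

lemma hom_eq_zero (h : SplitQH R A Λ Δ) {l m : Λ} (hlm : ¬ l ≤ m) (f : Δ l →ₗ[A] Δ m) : f = 0 := by
  by_contra hf
  exact hlm (h.hom_le l m ⟨f, hf⟩)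

lemma end_eq_smul (h : SplitQH R A Λ Δ) (l : Λ) (f : Δ l →ₗ[A] Δ l) : ∃ r :
    R, ∀ x, f x = r • x := by
  obtain ⟨e⟩ := h.endIso l
  refine ⟨e f, fun x => ?_⟩
  have : f = (e f) • (1 : Module.End A (Δ l)) := e.injective (by simp)
  conv_lhs => rw [this]
  rfl

lemma eq_zero_of_smul_eq_zero (h : SplitQH R A Λ Δ) (l : Λ) (r : R) (hr : ∀ x : Δ l, r • x = 0) :
    r = 0 := by
  obtain ⟨e⟩ := h.endIso l
  have : r • (1 : Module.End A (Δ l)) = 0 := LinearMap.ext hr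
  simpa using congrArg e this

/-- `X` admits no nonzero maps from `P(m)` for `m` outside of the list. -/
def IsSupported (L : List Λ) (X : Type) [AddCommGroup X] [Module A X] : Prop :=
  ∀ m ∉ L, ∀ f : h.P m →ₗ[A] X, f = 0

variable {h} {X : Type} [AddCommGroup X] [Module R X] [Module A X] [IsScalarTower R A X]
  {l : Λ} {L : List Λ}

lemma IsSupported.ker_epi_hom_eq_zero (hL : IsDescending (l :: L))
    (hX : h.IsSupported (l :: L) X) (f : LinearMap.ker (h.epi l) →ₗ[A] X) : f = 0 := by
  refine InFilt.induction (R := R) (Q := fun Y => ∀ f : Y →ₗ[A] X, f = 0) ?_ ?_ ?_ ?_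
    (h.ker_filt l) f
  · intro Y _ _ _ _ _ f
    ext y
    rw [Subsingleton.elim y 0]
    simp
  · intro Y Z _ _ _ _ _ _ _ _ e hY f
    ext z
    obtain ⟨y, rfl⟩ := e.surjective z
    exact LinearMap.congr_fun (hY (f.comp e.toLinearMap)) y
  · intro Y _ _ _ _ N hN hYN f
    obtain ⟨g, hg⟩ := LinearMap.exists_factor_of_ker_le N.mkQ N.mkQ_surjective f
      fun b hb => by
        have hb' : b ∈ N := by simpa using hb
        exact LinearMap.congr_fun (hN (f.comp N.subtype)) ⟨b, hb'⟩
    ext y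
    rw [← hg, hYN g]
    rfl
  · intro m hm U _ _ _
    refine hom_from_tensor_eq_zero fun g => ?_
    ext y
    obtain ⟨x, rfl⟩ := h.epi_surj m y
    exact LinearMap.congr_fun (hX m (hL.notMem_of_lt hm) (g.comp (h.epi m))) x

lemma IsSupported.exists_factor (hL : IsDescending (l :: L)) (hX : h.IsSupported (l :: L) X)
    (g : h.P l →ₗ[A] X) : ∃ f : Δ l →ₗ[A] X, ∀ x, f (h.epi l x) = g x :=
  LinearMap.exists_factor_of_ker_le _ (h.epi_surj l) g fun b hb =>
    LinearMap.congr_fun (hX.ker_epi_hom_eq_zero (R := R) hL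
      (g.comp (LinearMap.ker (h.epi l)).subtype)) ⟨b, hb⟩

lemma IsSupported.exists_lift (hL : IsDescending (l :: L)) (hX : h.IsSupported (l :: L) X)
    {Y : Type} [AddCommGroup Y] [Module A Y] (p : X →ₗ[A] Y) (hp : Function.Surjective p)
    (g : Δ l →ₗ[A] Y) : ∃ f : Δ l →ₗ[A] X, p.comp f = g := by
  have := h.P_proj l
  obtain ⟨k, hk⟩ := Module.projective_lifting_property p (g.comp (h.epi l)) hp
  obtain ⟨f, hf⟩ := hX.exists_factor hL k
  refine ⟨f, LinearMap.ext fun x => ?_⟩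
  obtain ⟨y, rfl⟩ := h.epi_surj l x
  rw [LinearMap.comp_apply, hf]
  exact LinearMap.congr_fun hk y

lemma IsSupported.quotient (hL : IsDescending (l :: L)) (hX : h.IsSupported (l :: L) X) :
    h.IsSupported L (X ⧸ LinearMap.range (evalTensor R A (Δ l) X)) := by
  intro m hm f
  have := h.P_proj m
  obtain ⟨k, hk⟩ := Module.projective_lifting_property
    (LinearMap.range (evalTensor R A (Δ l) X)).mkQ f (Submodule.mkQ_surjective _)
  rw [← hk]
  by_cases hml : m = l
  · subst hml
    obtain ⟨g, hg⟩ := hX.exists_factor hL k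
    ext x
    simp only [LinearMap.comp_apply, LinearMap.zero_apply, Submodule.mkQ_apply,
      Submodule.Quotient.mk_eq_zero]
    exact ⟨h.epi m x ⊗ₜ g, by simp [hg]⟩
  · rw [hX m (by simp [hml, hm]) k, LinearMap.comp_zero]

end SplitQH

section Exact

variable {X X' X'' D : Type} [AddCommGroup X] [Module R X] [Module A X] [IsScalarTower R A X]
  [AddCommGroup X'] [Module R X'] [Module A X'] [IsScalarTower R A X']
  [AddCommGroup X''] [Module R X''] [Module A X''] [IsScalarTower R A X'']
  [AddCommGroup D] [Module R D] [Module A D] [IsScalarTower R A D]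
  {i : X' →ₗ[A] X} {p : X →ₗ[A] X''}

lemma homPostcomp_injective (hi : Function.Injective i) :
    Function.Injective (homPostcomp (R := R) D i) := fun _ _ hfg =>
  LinearMap.ext fun x => hi (LinearMap.congr_fun hfg x)

lemma homPostcomp_exact (hi : Function.Injective i) (hip : Function.Exact i p) :
    Function.Exact (homPostcomp (R := R) D i) (homPostcomp (R := R) D p) := by
  intro f
  constructor
  · intro hf
    obtain ⟨g, hg⟩ := LinearMap.exists_factor_of_injective i hi f
      fun d => (hip _).1 (LinearMap.congr_fun hf d)
    exact ⟨g, LinearMap.ext hg⟩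
  · rintro ⟨g, rfl⟩
    ext x
    simp [hip.apply_apply_eq_zero]

/-- The snake lemma for the evaluation maps: if `Hom(D, -)` is exact on a short exact sequence
and the outer evaluation maps are injective, then so is the middle one, and the cokernels form
a short exact sequence. -/
lemma evalTensor_snake (hi : Function.Injective i) (hip : Function.Exact i p)
    (hp : Function.Surjective p) (hlift : Function.Surjective (homPostcomp (R := R) D p))
    (h' : Function.Injective (evalTensor R A D X'))
    (h'' : Function.Injective (evalTensor R A D X'')) :
    Function.Injective (evalTensor R A D X) ∧
    ∃ (i₁ : (X' ⧸ LinearMap.range (evalTensor R A D X')) →ₗ[A]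
          (X ⧸ LinearMap.range (evalTensor R A D X)))
      (p₁ : (X ⧸ LinearMap.range (evalTensor R A D X)) →ₗ[A]
          (X'' ⧸ LinearMap.range (evalTensor R A D X''))),
      Function.Injective i₁ ∧ Function.Exact i₁ p₁ ∧ Function.Surjective p₁ := by
  have hex := lTensor_exact D (homPostcomp_exact (R := R) (D := D) hi hip) hlift
  have hs := LinearMap.lTensor_surjective D hlift
  have hmap : ∀ x ∈ LinearMap.range (evalTensor R A D X'),
      i x ∈ LinearMap.range (evalTensor R A D X) := by
    rintro _ ⟨t, rfl⟩
    exact ⟨_, evalTensor_naturality i t⟩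
  have hmap' : ∀ x ∈ LinearMap.range (evalTensor R A D X),
      p x ∈ LinearMap.range (evalTensor R A D X'') := by
    rintro _ ⟨t, rfl⟩
    exact ⟨_, evalTensor_naturality p t⟩
  have hker : ∀ t, p (evalTensor R A D X t) = 0 →
      ∃ t', (homPostcomp (R := R) D i).lTensor D t' = t := fun t ht => by
    rw [← evalTensor_naturality, ← map_zero (evalTensor R A D X'')] at ht
    exact (hex t).1 (h'' ht)
  refine ⟨?_, Submodule.mapQ _ _ i hmap, Submodule.mapQ _ _ p hmap', ?_, ?_, ?_⟩
  · rw [injective_iff_map_eq_zero]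
    intro t ht
    obtain ⟨t', rfl⟩ := hker t (by rw [ht, map_zero])
    rw [evalTensor_naturality, ← map_zero i] at ht
    rw [h' ((hi ht).trans (map_zero _).symm), map_zero]
  · rw [injective_iff_map_eq_zero]
    intro x hx
    induction x using Submodule.Quotient.induction_on with
    | H x =>
      rw [Submodule.mapQ_apply, Submodule.Quotient.mk_eq_zero] at hx
      obtain ⟨t, ht⟩ := hx
      obtain ⟨t', rfl⟩ := hker t (by rw [ht, hip.apply_apply_eq_zero])
      rw [evalTensor_naturality] at ht
      rw [Submodule.Quotient.mk_eq_zero]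
      exact ⟨t', hi ht⟩
  · intro x
    induction x using Submodule.Quotient.induction_on with
    | H x =>
      rw [Submodule.mapQ_apply, Submodule.Quotient.mk_eq_zero]
      constructor
      · rintro ⟨t'', ht''⟩
        obtain ⟨t, rfl⟩ := hs t''
        rw [evalTensor_naturality] at ht''
        obtain ⟨x', hx'⟩ := (hip (x - evalTensor R A D X t)).1 (by rw [map_sub, ht'', sub_self])
        refine ⟨Submodule.Quotient.mk x', ?_⟩
        rw [Submodule.mapQ_apply, Submodule.Quotient.eq, hx']
        exact ⟨-t, by simp⟩
      · rintro ⟨x', hx'⟩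
        induction x' using Submodule.Quotient.induction_on with
        | H x' =>
          rw [Submodule.mapQ_apply, Submodule.Quotient.eq] at hx'
          simpa [hip.apply_apply_eq_zero] using hmap' _ hx'
  · intro x
    induction x using Submodule.Quotient.induction_on with
    | H x =>
      obtain ⟨y, rfl⟩ := hp x
      exact ⟨Submodule.Quotient.mk y, Submodule.mapQ_apply _ _ _ _⟩

variable {h : SplitQH R A Λ Δ}

lemma IsGood.of_exact {L : List Λ} (hL : IsDescending L) (hX : h.IsSupported L X)
    (hi : Function.Injective i) (hip : Function.Exact i p) (hp : Function.Surjective p)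
    (h' : IsGood R A Δ L X') (h'' : IsGood R A Δ L X'') : IsGood R A Δ L X := by
  induction L generalizing X X' X'' with
  | nil =>
    have : Subsingleton X' := h'
    have : Subsingleton X'' := h''
    refine ⟨fun a b => ?_⟩
    have hz : ∀ x : X, x = 0 := fun x => by
      obtain ⟨y, rfl⟩ := (hip x).1 (Subsingleton.elim _ _)
      rw [Subsingleton.elim y 0, map_zero]
    rw [hz a, hz b]
  | cons l L ih =>
    have hlift : Function.Surjective (homPostcomp (R := R) (Δ l) p) := fun g =>
      hX.exists_lift hL p hp g
    obtain ⟨hinj, i₁, p₁, hi₁, hip₁, hp₁⟩ := evalTensor_snake hi hip hp hlift h'.2.1 h''.2.1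
    exact ⟨IsFinProj.of_exact (homPostcomp_injective hi) (homPostcomp_exact hi hip) hlift
      h'.1 h''.1, hinj, ih hL.tail (hX.quotient hL) hi₁ hip₁ hp₁ h'.2.2 h''.2.2⟩

end Exact

namespace SplitQH

variable (h : SplitQH R A Λ Δ) {L : List Λ}

lemma isGood_tensor (h : SplitQH R A Λ Δ) (hL : IsDescending L) {m : Λ} (hm : m ∈ L) {U : Type}
    [AddCommGroup U]
    [Module R U] (hU : IsFinProj R U) : IsGood R A Δ L (Δ m ⊗[R] U) := by
  induction L with
  | nil => simp at hm
  | cons l L ih =>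
    by_cases hml : m = l
    · subst hml
      have hb := evalTensor_bijective_tensor (A := A) hU (h.end_eq_smul m)
        (h.eq_zero_of_smul_eq_zero m)
      obtain ⟨e, -⟩ := exists_equiv_hom_tensor (A := A) hU (h.end_eq_smul m)
        (h.eq_zero_of_smul_eq_zero m)
      refine ⟨hU.of_equiv e.symm, hb.1, ?_⟩
      have := Submodule.Quotient.subsingleton_iff.2 (LinearMap.range_eq_top.2 hb.2)
      exact IsGood.of_subsingleton _ _
    · have hm' : m ∈ L := by simpa [hml] using hm
      have hz : ∀ f : Δ l →ₗ[A] Δ m ⊗[R] U, f = 0 := hom_to_tensor_eq_zero hU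
        (h.hom_eq_zero fun hle =>
          ((List.pairwise_cons.1 hL).1 m hm').2 (lt_of_le_of_ne hle (Ne.symm hml)))
      have : Subsingleton (Δ l →ₗ[A] Δ m ⊗[R] U) := ⟨fun f g => by rw [hz f, hz g]⟩
      have h0 : ∀ t : Δ l ⊗[R] (Δ l →ₗ[A] Δ m ⊗[R] U), t = 0 := fun t => by
        induction t with
        | zero => rfl
        | tmul d u => rw [hz u, TensorProduct.tmul_zero]
        | add s t hs ht => simp [hs, ht]
      refine ⟨IsFinProj.of_subsingleton _, fun s t _ => by rw [h0 s, h0 t], ?_⟩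
      have hr : LinearMap.range (evalTensor R A (Δ l) (Δ m ⊗[R] U)) = ⊥ := by
        rw [LinearMap.range_eq_bot]
        exact tensor_hom_ext fun x u => by rw [h0 (x ⊗ₜ u), map_zero, map_zero]
      exact (ih hL.tail hm').of_equiv (Submodule.quotEquivOfEqBot _ hr)

end SplitQH
end Good

section GoodAlgebra

set_option linter.unusedSectionVars false

variable {R : Type} [CommRing R] {A : Type} [Ring A] [Algebra R A]
variable {Λ : Type} [Fintype Λ] [PartialOrder Λ]
variable {Δ : Λ → Type} [∀ l, AddCommGroup (Δ l)] [∀ l, Module R (Δ l)]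
  [∀ l, Module A (Δ l)] [∀ l, IsScalarTower R A (Δ l)]

namespace SplitQH

variable (h : SplitQH R A Λ Δ) {L : List Λ}

lemma isSupported_of_forall_mem (hmem : ∀ l, l ∈ L) (X : Type) [AddCommGroup X] [Module A X] :
    h.IsSupported L X := fun m hm => (hm (hmem m)).elim

lemma isGood_P (hL : IsDescending L) (hmem : ∀ l, l ∈ L) (l : Λ) :
    IsGood R A Δ L (h.P l) := by
  refine IsGood.of_exact hL (h.isSupported_of_forall_mem hmem _)
    (LinearMap.ker (h.epi l)).subtype_injective (h.epi l).exact_subtype_ker_map (h.epi_surj l)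
    ?_ ((h.isGood_tensor hL (hmem l) (U := R) ⟨inferInstance, inferInstance⟩).of_equiv
      (TensorProduct.AlgebraTensorModule.rid R A (Δ l)).symm)
  refine InFilt.induction (R := R) (Q := fun Y => IsGood R A Δ L Y) ?_ ?_ ?_ ?_ (h.ker_filt l)
  · intro Y _ _ _ _ _
    exact IsGood.of_subsingleton _ _
  · intro Y Z _ _ _ _ _ _ _ _ e hY
    exact hY.of_equiv e.symm
  · intro Y _ _ _ _ N hN hYN
    exact IsGood.of_exact hL (h.isSupported_of_forall_mem hmem _) N.subtype_injective
      (LinearMap.exact_subtype_mkQ N) N.mkQ_surjective hN hYN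
  · intro m _ U _ _ hU
    exact h.isGood_tensor hL (hmem m) hU

lemma isGood_prod (h : SplitQH R A Λ Δ) (hL : IsDescending L) (hmem : ∀ l, l ∈ L) {X Y : Type}
    [AddCommGroup X] [Module R X] [Module A X] [IsScalarTower R A X]
    [AddCommGroup Y] [Module R Y] [Module A Y] [IsScalarTower R A Y]
    (hX : IsGood R A Δ L X) (hY : IsGood R A Δ L Y) : IsGood R A Δ L (X × Y) :=
  IsGood.of_exact hL (h.isSupported_of_forall_mem hmem _) LinearMap.inl_injective
    (Function.Exact.inl_snd (R := A)) LinearMap.snd_surjective hX hY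

lemma isGood_pi (h : SplitQH R A Λ Δ) (hL : IsDescending L) (hmem : ∀ l, l ∈ L) {ι : Type}
    [Finite ι]
    (Y : ι → Type) [∀ i, AddCommGroup (Y i)] [∀ i, Module R (Y i)] [∀ i, Module A (Y i)]
    [∀ i, IsScalarTower R A (Y i)] (hY : ∀ i, IsGood R A Δ L (Y i)) :
    IsGood R A Δ L (∀ i, Y i) := by
  revert Y
  refine Finite.induction_empty_option (P := fun ι => ∀ (Y : ι → Type)
    [∀ i, AddCommGroup (Y i)] [∀ i, Module R (Y i)] [∀ i, Module A (Y i)]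
    [∀ i, IsScalarTower R A (Y i)], (∀ i, IsGood R A Δ L (Y i)) →
    IsGood R A Δ L (∀ i, Y i)) ?_ ?_ ?_ ι
  · intro α β e ih Y _ _ _ _ hY
    exact (ih (fun a => Y (e a)) fun a => hY (e a)).of_equiv
      (LinearEquiv.piCongrLeft A Y e).symm
  · intro Y _ _ _ _ _
    exact IsGood.of_subsingleton _ _
  · intro α _ ih Y _ _ _ _ hY
    exact (h.isGood_prod hL hmem (hY none) (ih (fun a => Y (some a)) fun a => hY (some a))).of_equiv
      (LinearEquiv.piOptionEquivProd A)

lemma isGood_self (h : SplitQH R A Λ Δ) (hL : IsDescending L) (hmem : ∀ l, l ∈ L) :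
    IsGood R A Δ L A := by
  obtain ⟨n, i, p, hpi⟩ := h.add_gen (ModuleCat.of A A) (inferInstanceAs (Module.Finite A A))
    (inferInstanceAs (Module.Projective A A))
  exact (h.isGood_pi hL hmem (fun _ : Fin n => ∀ l, h.P l) fun _ =>
    h.isGood_pi hL hmem (fun l => h.P l) fun l => h.isGood_P hL hmem l).of_retract i p
    (LinearMap.congr_fun hpi)

end SplitQH

variable {X : Type} [AddCommGroup X] [Module R X] [Module A X] [IsScalarTower R A X]
  {N : Type} [AddCommGroup N] [Module R N] [Module A N] [IsScalarTower R A N] {L : List Λ}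

lemma evalTensor_exact_mkQ (D X : Type) [AddCommGroup D] [Module R D] [Module A D]
    [IsScalarTower R A D] [AddCommGroup X] [Module R X] [Module A X] [IsScalarTower R A X] :
    Function.Exact (evalTensor R A D X) (LinearMap.range (evalTensor R A D X)).mkQ :=
  LinearMap.exact_map_mkQ_range _

lemma ExtOneVanishes.of_subsingleton [Subsingleton X] : ExtOneVanishes R A X N :=
  fun _ _ _ _ _ f _ g => ⟨g.comp (LinearMap.id.codRestrict _ fun x => Subsingleton.elim (f x) 0),
    fun _ => rfl⟩

lemma IsGood.extOneVanishes (hX : IsGood R A Δ L X)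
    (hN : ∀ l ∈ L, ExtOneVanishes R A (Δ l) N) : ExtOneVanishes R A X N := by
  induction L generalizing X with
  | nil =>
    have : Subsingleton X := hX
    exact ExtOneVanishes.of_subsingleton
  | cons l L ih =>
    have := hX.1.2
    exact ExtOneVanishes.of_exact hX.2.1 (evalTensor_exact_mkQ _ _) (Submodule.mkQ_surjective _)
      (hN l (by simp)).tensor (ih hX.2.2 fun m hm => hN m (by simp [hm]))

lemma IsGood.hom_eq_zero (hX : IsGood R A Δ L X)
    (hN : ∀ l ∈ L, ∀ f : Δ l →ₗ[A] N, f = 0) (f : X →ₗ[A] N) : f = 0 := by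
  induction L generalizing X with
  | nil =>
    have : Subsingleton X := hX
    exact LinearMap.ext fun x => by rw [Subsingleton.elim x 0]; simp
  | cons l L ih =>
    obtain ⟨g, rfl⟩ := (homPrecomp_exact (R := R) (M := N) (evalTensor_exact_mkQ (R := R) (Δ l) X)
      (Submodule.mkQ_surjective _) f).1 (hom_from_tensor_eq_zero (hN l (by simp)) _)
    rw [ih hX.2.2 (fun m hm => hN m (by simp [hm])) g, map_zero]

lemma IsGood.isFinProj_hom (hX : IsGood R A Δ L X)
    (hN : ∀ l ∈ L, ExtOneVanishes R A (Δ l) N) (hN' : ∀ l ∈ L, IsFinProj R (Δ l →ₗ[A] N)) :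
    IsFinProj R (X →ₗ[A] N) := by
  induction L generalizing X with
  | nil =>
    have : Subsingleton X := hX
    have : Subsingleton (X →ₗ[A] N) :=
      ⟨fun f g => LinearMap.ext fun x => by rw [Subsingleton.elim x 0, map_zero, map_zero]⟩
    exact IsFinProj.of_subsingleton _
  | cons l L ih =>
    refine IsFinProj.of_exact
      (homPrecomp_injective_of_surjective (Submodule.mkQ_surjective _))
      (homPrecomp_exact (evalTensor_exact_mkQ (Δ l) X) (Submodule.mkQ_surjective _))
      (homPrecomp_surjective hX.2.1 (evalTensor_exact_mkQ _ _) (Submodule.mkQ_surjective _)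
        (hX.2.2.extOneVanishes fun m hm => hN m (by simp [hm])))
      (ih hX.2.2 (fun m hm => hN m (by simp [hm])) fun m hm => hN' m (by simp [hm]))
      ((hX.1.linearMap (hN' l (by simp))).of_equiv (tensorCurryEquiv R A _ _ _))

lemma isFinProj_hom_of_projective {P : Type} [AddCommGroup P] [Module A P] [Module R P]
    [IsScalarTower R A P] [Module.Finite A P] [Module.Projective A P] (hN : IsFinProj R N) :
    IsFinProj R (P →ₗ[A] N) := by
  obtain ⟨n, q, s, -, -, hqs⟩ := Module.Finite.exists_comp_eq_id_of_projective A P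
  have hfin : IsFinProj R (Fin n → N) :=
    (IsFinProj.linearMap (V := Fin n → R) ⟨inferInstance, inferInstance⟩ hN).of_equiv
      (Module.piEquiv (Fin n) R N)
  refine hfin.of_retract
    { toFun := fun f k => f (q (Pi.single k 1))
      map_add' := fun _ _ => rfl
      map_smul' := fun _ _ => rfl }
    { toFun := fun m => ∑ k, (LinearMap.toSpanSingleton A N (m k)).comp ((LinearMap.proj k).comp s)
      map_add' := fun m m' => by
        ext x
        simp [Finset.sum_add_distrib]
      map_smul' := fun r m => by
        ext x
        simp [Finset.smul_sum, smul_comm r] } ?_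
  ext f x
  have : x = ∑ k, (s x) k • q (Pi.single k 1) := by
    conv_lhs => rw [← LinearMap.id_apply (R := A) x, ← hqs, LinearMap.comp_apply,
      pi_eq_sum_univ' (s x), map_sum]
    simp only [map_smul]
  conv_rhs => rw [this]
  simp

/-- If `Ext¹(Δ(l), M)` vanishes for all `l`, then the modules `Hom(Δ(l), M)` are finitely generated
projective. -/
lemma SplitQH.isFinProj_hom (h : SplitQH R A Λ Δ) (hN : IsFinProj R N)
    (hE : ∀ l, ExtOneVanishes R A (Δ l) N) (l : Λ) : IsFinProj R (Δ l →ₗ[A] N) := by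
  induction l using WellFoundedGT.induction with
  | ind l ih =>
    have hK : IsFinProj R (LinearMap.ker (h.epi l) →ₗ[A] N) ∧
        ExtOneVanishes R A (LinearMap.ker (h.epi l)) N := by
      refine InFilt.induction (R := R) (Q := fun Y => IsFinProj R (Y →ₗ[A] N) ∧
        ExtOneVanishes R A Y N) ?_ ?_ ?_ ?_ (h.ker_filt l)
      · intro Y _ _ _ _ _
        have : Subsingleton (Y →ₗ[A] N) :=
          ⟨fun f g => LinearMap.ext fun x => by rw [Subsingleton.elim x 0, map_zero, map_zero]⟩
        exact ⟨IsFinProj.of_subsingleton _, ExtOneVanishes.of_subsingleton⟩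
      · intro Y Z _ _ _ _ _ _ _ _ e hY
        refine ⟨hY.1.of_retract (homPrecomp N e.toLinearMap) (homPrecomp N e.symm.toLinearMap)
          (by ext; simp), ?_⟩
        exact ExtOneVanishes.of_exact (i := (0 : (Fin 0 → A) →ₗ[A] Z)) (p := e.symm.toLinearMap)
          (Function.injective_of_subsingleton _) (fun z => by simpa using eq_comm) e.symm.surjective
          (ExtOneVanishes.of_subsingleton) hY.2
      · intro Y _ _ _ _ K hK hYK
        exact ⟨IsFinProj.of_exact (homPrecomp_injective_of_surjective K.mkQ_surjective)
          (homPrecomp_exact (LinearMap.exact_subtype_mkQ K) K.mkQ_surjective)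
          (homPrecomp_surjective K.subtype_injective (LinearMap.exact_subtype_mkQ K)
            K.mkQ_surjective hYK.2) hYK.1 hK.1,
          ExtOneVanishes.of_exact K.subtype_injective (LinearMap.exact_subtype_mkQ K)
            K.mkQ_surjective hK.2 hYK.2⟩
      · intro m hm U _ _ hU
        have := hU.2
        exact ⟨(hU.linearMap (ih m hm)).of_equiv (tensorCurryEquiv R A _ _ _), (hE m).tensor⟩
    have := h.P_proj l
    have := h.P_fin l
    exact IsFinProj.left_of_exact (homPrecomp_injective_of_surjective (h.epi_surj l))
      (homPrecomp_exact (h.epi l).exact_subtype_ker_map (h.epi_surj l))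
      (homPrecomp_surjective (LinearMap.ker (h.epi l)).subtype_injective
        (h.epi l).exact_subtype_ker_map (h.epi_surj l) (hE l))
      (isFinProj_hom_of_projective hN) hK.1

end GoodAlgebra

section Chain

variable {A : Type} [Ring A] {M : Type} [AddCommGroup M] [Module A M]

/-- A finite chain of submodules from `⊥` to `T` all of whose steps satisfy `F`. -/
def HasChain (F : Submodule A M → Submodule A M → Prop) (T : Submodule A M) : Prop :=
  ∃ (n : ℕ) (c : Fin (n + 1) → Submodule A M), c 0 = ⊥ ∧ c (Fin.last n) = T ∧ Monotone c ∧
    ∀ i : Fin n, F (c i.castSucc) (c i.succ)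

lemma HasChain.bot (F : Submodule A M → Submodule A M → Prop) : HasChain F ⊥ :=
  ⟨0, fun _ => ⊥, rfl, rfl, monotone_const, fun i => i.elim0⟩

lemma HasChain.snoc {F : Submodule A M → Submodule A M → Prop} {T T' : Submodule A M}
    (hT : HasChain F T) (hle : T ≤ T') (h : F T T') : HasChain F T' := by
  obtain ⟨n, c, h0, hn, hc, hF⟩ := hT
  have key : ∀ i : Fin (n + 1),
      (Fin.snoc c T' : Fin (n + 2) → Submodule A M) i.castSucc ≤
        (Fin.snoc c T' : Fin (n + 2) → Submodule A M) i.succ ∧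
      F ((Fin.snoc c T' : Fin (n + 2) → Submodule A M) i.castSucc)
        ((Fin.snoc c T' : Fin (n + 2) → Submodule A M) i.succ) := by
    intro i
    induction i using Fin.lastCases with
    | last => rw [Fin.succ_last, Fin.snoc_last, Fin.snoc_castSucc, hn]; exact ⟨hle, h⟩
    | cast i =>
      rw [Fin.succ_castSucc, Fin.snoc_castSucc, Fin.snoc_castSucc]
      exact ⟨hc (Fin.castSucc_le_succ i), hF i⟩
  refine ⟨n + 1, Fin.snoc c T', ?_, Fin.snoc_last _ _,
    Fin.monotone_iff_le_succ.2 fun i => (key i).1, fun i => (key i).2⟩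
  rw [← Fin.castSucc_zero, Fin.snoc_castSucc, h0]

end Chain

section Criterion

set_option linter.unusedSectionVars false

variable {R : Type} [CommRing R] {A : Type} [Ring A] [Algebra R A]
variable {M : Type} [AddCommGroup M] [Module R M] [Module A M] [IsScalarTower R A M]

/-- The largest submodule of `M` annihilated by the two-sided ideal generated by `J`. -/
def annIn (J : Submodule A A) (M : Type) [AddCommGroup M] [Module A M] : Submodule A M where
  carrier := {m | ∀ j ∈ J, ∀ a : A, (j * a) • m = 0}
  add_mem' hm hn j hj a := by rw [smul_add, hm j hj a, hn j hj a, add_zero]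
  zero_mem' _ _ _ := smul_zero _
  smul_mem' b m hm j hj a := by rw [← mul_smul, mul_assoc]; exact hm j hj _

lemma mem_annIn {J : Submodule A A} {m : M} :
    m ∈ annIn J M ↔ ∀ j ∈ J, ∀ a : A, (j * a) • m = 0 := Iff.rfl

lemma annIn_anti {J J' : Submodule A A} (hJ : J ≤ J') : annIn J' M ≤ annIn J M :=
  fun _ hm j hj a => hm j (hJ hj) a

variable {J : Submodule A A} (hJ : ∀ j ∈ J, ∀ a : A, j * a ∈ J)

variable (R M) in
/-- Maps out of `A ⧸ J` are the elements annihilated by `J`. -/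
def annInEquiv : annIn J M ≃ₗ[R] ((A ⧸ J) →ₗ[A] M) where
  toFun m := J.liftQ (LinearMap.toSpanSingleton A M m) fun j hj => by
    simpa using m.2 j hj 1
  invFun f := ⟨f (J.mkQ 1), fun j hj a => by
    rw [← map_smul, ← map_smul, smul_eq_mul, mul_one, Submodule.mkQ_apply,
      (Submodule.Quotient.mk_eq_zero J).2 (hJ j hj a), map_zero]⟩
  map_add' m n := Submodule.linearMap_qext _ (by ext; simp)
  map_smul' r m := Submodule.linearMap_qext _ (by ext; simp)
  left_inv m := by ext; simp
  right_inv f := Submodule.linearMap_qext _ (by ext; simp)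

@[simp] lemma annInEquiv_mk (m : annIn J M) (a : A) :
    annInEquiv R M hJ m (Submodule.Quotient.mk a) = a • (m : M) := rfl

/-- Right multiplication on `A ⧸ J`. -/
def quotRightMul (a : A) : (A ⧸ J) →ₗ[A] (A ⧸ J) :=
  J.mapQ J (LinearMap.toSpanSingleton A A a) fun j hj => hJ j hj a

@[simp] lemma quotRightMul_mk (a b : A) :
    quotRightMul hJ a (Submodule.Quotient.mk b) = Submodule.Quotient.mk (b * a) := rfl

lemma annInEquiv_smul (m : annIn J M) (a : A) :
    annInEquiv R M hJ (a • m) = (annInEquiv R M hJ m).comp (quotRightMul hJ a) :=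
  Submodule.linearMap_qext _ (by ext; simp)

variable (D : Type) [AddCommGroup D] [Module R D] [Module A D] [IsScalarTower R A D]

variable (R M) in
/-- The comparison map from the part of `M` annihilated by `J` to
`Hom(Hom(D, A ⧸ J), Hom(D, M))`. -/
noncomputable def annInComparison :
    annIn J M →ₗ[R] ((D →ₗ[A] A ⧸ J) →ₗ[R] (D →ₗ[A] M)) :=
  (tensorCurryEquiv R A D M (D →ₗ[A] A ⧸ J)).toLinearMap ∘ₗ
    homPrecomp M (evalTensor R A D (A ⧸ J)) ∘ₗ (annInEquiv R M hJ).toLinearMap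

lemma annInComparison_apply (m : annIn J M) (u : D →ₗ[A] A ⧸ J) :
    annInComparison R M hJ D m u = (annInEquiv R M hJ m).comp u := by
  ext x
  simp [annInComparison, tensorCurryEquiv]

lemma annInComparison_smul (a : A) (m : annIn J M) (u : D →ₗ[A] A ⧸ J) :
    annInComparison R M hJ D (a • m) u =
      annInComparison R M hJ D m (homPostcomp (R := R) D (quotRightMul hJ a) u) := by
  rw [annInComparison_apply, annInComparison_apply, annInEquiv_smul]
  rfl

variable (R J) in
/-- The preimage in `A` of the trace of `D` in `A ⧸ J`. -/
noncomputable def traceIdeal : Submodule A A :=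
  (LinearMap.range (evalTensor R A D (A ⧸ J))).comap J.mkQ

lemma le_traceIdeal : J ≤ traceIdeal R J D := fun j hj => by
  rw [traceIdeal, Submodule.mem_comap, Submodule.mkQ_apply, (Submodule.Quotient.mk_eq_zero J).2 hj]
  exact zero_mem _

lemma traceIdeal_mul_mem (hJ : ∀ j ∈ J, ∀ a : A, j * a ∈ J) :
    ∀ j ∈ traceIdeal R J D, ∀ a : A, j * a ∈ traceIdeal R J D := by
  rintro j ⟨t, ht⟩ a
  exact ⟨_, (evalTensor_naturality (quotRightMul hJ a) t).trans (by rw [ht]; rfl)⟩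

variable (R J) in
/-- The quotient of `A ⧸ J` by the trace of `D`. -/
noncomputable def traceQuotientEquiv :
    (A ⧸ traceIdeal R J D) ≃ₗ[A] ((A ⧸ J) ⧸ LinearMap.range (evalTensor R A D (A ⧸ J))) :=
  ((Submodule.quotEquivOfEq _ _ (by
    rw [traceIdeal, Submodule.map_comap_eq_of_surjective J.mkQ_surjective])).trans
    (Submodule.quotientQuotientEquivQuotient J (traceIdeal R J D) (le_traceIdeal D))).symm

lemma annInComparison_eq_zero_iff (m : annIn J M) :
    annInComparison R M hJ D m = 0 ↔ (m : M) ∈ annIn (traceIdeal R J D) M := by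
  rw [mem_annIn]
  constructor
  · intro hm j hj a
    obtain ⟨t, ht⟩ := traceIdeal_mul_mem D hJ j hj a
    have h1 : homPrecomp (R := R) M (evalTensor R A D (A ⧸ J)) (annInEquiv R M hJ m) = 0 :=
      (tensorCurryEquiv R A D M _).map_eq_zero_iff.1 hm
    have h2 := LinearMap.congr_fun h1 t
    rw [homPrecomp_apply, LinearMap.comp_apply, ht] at h2
    exact h2
  · intro hm
    ext u x
    rw [annInComparison_apply]
    obtain ⟨b, hb⟩ := J.mkQ_surjective (u x)
    have hb' : b ∈ traceIdeal R J D := ⟨x ⊗ₜ u, by rw [evalTensor_tmul, hb]⟩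
    rw [LinearMap.comp_apply, ← hb]
    simpa using hm b hb' 1

lemma annInComparison_surjective (hinj : Function.Injective (evalTensor R A D (A ⧸ J)))
    (hE : ExtOneVanishes R A ((A ⧸ J) ⧸ LinearMap.range (evalTensor R A D (A ⧸ J))) M) :
    Function.Surjective (annInComparison R M hJ D) :=
  (tensorCurryEquiv R A D M _).surjective.comp
    ((homPrecomp_surjective hinj (evalTensor_exact_mkQ _ _) (Submodule.mkQ_surjective _) hE).comp
      (annInEquiv R M hJ).surjective)

/-- An `R`-bijection `N ≃ U*`, compatible with the `A`-action on `N` and some operators on `U`,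
turns a surjection `T → Hom(U, V)` with the same compatibility into an isomorphism
`T / ker ≃ N ⊗ V`. -/
lemma exists_equiv_tensor_of_comparison {N T U V : Type} [AddCommGroup N] [Module R N]
    [Module A N] [IsScalarTower R A N] [AddCommGroup T] [Module R T] [Module A T]
    [IsScalarTower R A T] [AddCommGroup U] [Module R U] [AddCommGroup V] [Module R V]
    (hU : IsFinProj R U) (ρ : A → U →ₗ[R] U) (γ : N ≃ₗ[R] (U →ₗ[R] R))
    (hγ : ∀ a y u, γ (a • y) u = γ y (ρ a u)) (θ : T →ₗ[R] (U →ₗ[R] V))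
    (hθ : ∀ a t u, θ (a • t) u = θ t (ρ a u)) (hs : Function.Surjective θ)
    (K : Submodule A T) (hK : ∀ t, θ t = 0 ↔ t ∈ K) :
    Nonempty ((T ⧸ K) ≃ₗ[A] N ⊗[R] V) := by
  obtain ⟨_, _⟩ := hU
  let β : N ⊗[R] V ≃ₗ[R] (U →ₗ[R] V) :=
    (TensorProduct.congr γ (LinearEquiv.refl R V)).trans (dualTensorHomEquiv R U V)
  have hβ : ∀ y v u, β (y ⊗ₜ v) u = γ y u • v := fun y v u => by
    simp [β]
  have hβ' : ∀ (a : A) (t : N ⊗[R] V) (u : U), β (a • t) u = β t (ρ a u) := fun a t u => by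
    induction t with
    | zero => simp
    | tmul y v => rw [TensorProduct.smul_tmul', hβ, hβ, hγ]
    | add s t hs ht => rw [smul_add, map_add, map_add, LinearMap.add_apply, hs, ht]; rfl
  let δ : T →ₗ[A] N ⊗[R] V :=
    { toFun := fun t => β.symm (θ t)
      map_add' := fun s t => by simp
      map_smul' := fun a t => by
        apply β.injective
        ext u
        simp [hβ', hθ] }
  have hker : K = LinearMap.ker δ := by
    ext t
    rw [← hK, LinearMap.mem_ker]
    exact (β.symm.map_eq_zero_iff (x := θ t)).symm
  exact ⟨(Submodule.quotEquivOfEq _ _ hker).trans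
    (δ.quotKerEquivOfSurjective (β.symm.surjective.comp hs))⟩

variable {Λ : Type} [Fintype Λ] [PartialOrder Λ]
variable {Δ : Λ → Type} [∀ l, AddCommGroup (Δ l)] [∀ l, Module R (Δ l)]
  [∀ l, Module A (Δ l)] [∀ l, IsScalarTower R A (Δ l)]
variable {N : Λ → Type} [∀ l, AddCommGroup (N l)] [∀ l, Module R (N l)]
  [∀ l, Module A (N l)] [∀ l, IsScalarTower R A (N l)]

lemma hasChain_annIn (hN : ∀ l, Nonempty ((Δ l →ₗ[A] N l) ≃ₗ[R] R))
    (hN0 : ∀ l m, l ≠ m → ∀ f : Δ l →ₗ[A] N m, f = 0)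
    (hNE : ∀ l m, ExtOneVanishes R A (Δ l) (N m))
    (hM : ∀ l, ExtOneVanishes R A (Δ l) M) (hV : ∀ l, IsFinProj R (Δ l →ₗ[A] M))
    {L : List Λ} (hL : IsDescending L) {J : Submodule A A} (hJ : ∀ j ∈ J, ∀ a : A, j * a ∈ J)
    (hgood : IsGood R A Δ L (A ⧸ J)) (hNJ : ∀ l ∈ L, annIn J (N l) = ⊤) :
    HasChain (fun T T' : Submodule A M =>
      Nonempty (TensorFactor R A Λ N Set.univ (T' ⧸ T.comap T'.subtype))) (annIn J M) := by
  induction L generalizing J with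
  | nil =>
    have h1 : J = ⊤ := Submodule.Quotient.subsingleton_iff.1 hgood
    have h2 : annIn J M = ⊥ := eq_bot_iff.2 fun m hm => by
      simpa using hm 1 (by simp [h1]) 1
    rw [h2]
    exact HasChain.bot _
  | cons l L ih =>
    have hgood' : IsGood R A Δ L (A ⧸ traceIdeal R J (Δ l)) :=
      hgood.2.2.of_equiv (traceQuotientEquiv R J (Δ l))
    have hJ' := traceIdeal_mul_mem (R := R) (Δ l) hJ
    have hne : ∀ m ∈ L, l ≠ m := fun m hm => ((List.pairwise_cons.1 hL).1 m hm).1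
    refine (ih hL.tail hJ' hgood' fun m hm => ?_).snoc (annIn_anti (le_traceIdeal _)) ?_
    · refine eq_top_iff.2 fun y _ => ?_
      have hy : y ∈ annIn J (N m) := by rw [hNJ m (by simp [hm])]; trivial
      refine (annInComparison_eq_zero_iff hJ (Δ l) ⟨y, hy⟩).1 ?_
      ext u : 1
      exact hN0 l m (hne m hm) _
    · have hNtop := hNJ l (by simp)
      have hinj : Function.Injective (annInComparison R (N l) hJ (Δ l)) := by
        rw [injective_iff_map_eq_zero]
        intro y hy
        rw [annInComparison_eq_zero_iff] at hy
        have := hgood'.hom_eq_zero (fun m hm => hN0 m l (hne m hm).symm)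
          (annInEquiv R (N l) hJ' ⟨y, hy⟩)
        simpa using this
      obtain ⟨e⟩ := hN l
      let γ : N l ≃ₗ[R] ((Δ l →ₗ[A] A ⧸ J) →ₗ[R] R) :=
        (((LinearEquiv.ofTop _ hNtop).restrictScalars R).symm.trans
          (LinearEquiv.ofBijective _ ⟨hinj, annInComparison_surjective hJ _ hgood.2.1
            (hgood.2.2.extOneVanishes fun m _ => hNE m l)⟩)).trans
          (LinearEquiv.congrRight e)
      obtain ⟨iso⟩ := exists_equiv_tensor_of_comparison (A := A) (T := annIn J M) hgood.1
        (fun a => homPostcomp (R := R) (Δ l) (quotRightMul hJ a)) γ (fun a y u => by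
          exact congrArg e (annInComparison_smul hJ (Δ l) a
            ((LinearEquiv.ofTop _ hNtop).symm y) u))
        (annInComparison R M hJ (Δ l)) (annInComparison_smul hJ (Δ l))
        (annInComparison_surjective hJ _ hgood.2.1 (hgood.2.2.extOneVanishes fun m _ => hM m))
        ((annIn (traceIdeal R J (Δ l)) M).comap (annIn J M).subtype)
        (annInComparison_eq_zero_iff hJ (Δ l))
      exact ⟨⟨l, trivial, ModuleCat.of R (Δ l →ₗ[A] M), (hV l).1, (hV l).2, iso⟩⟩

/-- If `Ext¹(Δ(l), M)` vanishes for all `l`, then `M` has a filtration by the modules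
`N(l) ⊗ Hom(Δ(l), M)`. -/
theorem SplitQH.inFilt_of_extOneVanishes (h : SplitQH R A Λ Δ)
    (hN : ∀ l, Nonempty ((Δ l →ₗ[A] N l) ≃ₗ[R] R))
    (hN0 : ∀ l m, l ≠ m → ∀ f : Δ l →ₗ[A] N m, f = 0)
    (hNE : ∀ l m, ExtOneVanishes R A (Δ l) (N m)) (hfin : Module.Finite A M)
    (hproj : Module.Projective R M) (hM : ∀ l, ExtOneVanishes R A (Δ l) M) :
    InFilt R A Λ N Set.univ M := by
  have := h.algFin
  obtain ⟨L, hL, hmem⟩ := exists_isDescending (Λ := Λ)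
  have hbot : ∀ (X : Type) [AddCommGroup X] [Module A X], annIn (⊥ : Submodule A A) X = ⊤ :=
    fun X _ _ => eq_top_iff.2 fun x _ j hj a => by simp [(Submodule.mem_bot A).1 hj]
  have key := hasChain_annIn hN hN0 hNE hM
    (h.isFinProj_hom ⟨Module.Finite.trans A M, hproj⟩ hM) hL
    (J := ⊥) (fun j hj a => by simp [(Submodule.mem_bot A).1 hj])
    ((h.isGood_self hL hmem).of_equiv (Submodule.quotEquivOfEqBot _ rfl)) fun l _ => hbot _
  rw [hbot] at key
  exact ⟨hfin, key⟩

end Criterion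

section Duality

set_option linter.unusedSectionVars false

variable {R : Type} [CommRing R] {A : Type} [Ring A] [Algebra R A]

section DualMap

variable {Y' Y Y'' : Type} [AddCommGroup Y'] [Module R Y'] [Module Aᵐᵒᵖ Y']
  [IsScalarTower R Aᵐᵒᵖ Y'] [AddCommGroup Y] [Module R Y] [Module Aᵐᵒᵖ Y]
  [IsScalarTower R Aᵐᵒᵖ Y] [AddCommGroup Y''] [Module R Y''] [Module Aᵐᵒᵖ Y'']
  [IsScalarTower R Aᵐᵒᵖ Y'']

/-- The dual of a map of right `A`-modules. -/
def opDualMap (i : Y' →ₗ[Aᵐᵒᵖ] Y) : (Y →ₗ[R] R) →ₗ[A] (Y' →ₗ[R] R) where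
  toFun f := f.comp (i.restrictScalars R)
  map_add' _ _ := rfl
  map_smul' a f := by
    ext y
    simp

@[simp] lemma opDualMap_apply (i : Y' →ₗ[Aᵐᵒᵖ] Y) (f : Y →ₗ[R] R) (y : Y') :
    opDualMap i f y = f (i y) := rfl

lemma opDualMap_injective {p : Y →ₗ[Aᵐᵒᵖ] Y''} (hp : Function.Surjective p) :
    Function.Injective (opDualMap (R := R) p) := fun f g hfg => by
  ext y
  obtain ⟨x, rfl⟩ := hp y
  exact LinearMap.congr_fun hfg x

lemma opDualMap_exact {i : Y' →ₗ[Aᵐᵒᵖ] Y} {p : Y →ₗ[Aᵐᵒᵖ] Y''} (hip : Function.Exact i p)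
    (hp : Function.Surjective p) :
    Function.Exact (opDualMap (R := R) p) (opDualMap (R := R) i) := by
  intro f
  constructor
  · intro hf
    obtain ⟨k, hk⟩ := LinearMap.exists_factor_of_ker_le (p.restrictScalars R) hp f fun b hb => by
      obtain ⟨x, rfl⟩ := (hip b).1 hb
      exact LinearMap.congr_fun hf x
    exact ⟨k, LinearMap.ext hk⟩
  · rintro ⟨k, rfl⟩
    ext x
    simp [hip.apply_apply_eq_zero x]

lemma opDualMap_surjective {i : Y' →ₗ[Aᵐᵒᵖ] Y} {p : Y →ₗ[Aᵐᵒᵖ] Y''}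
    (hi : Function.Injective i) (hip : Function.Exact i p) (hp : Function.Surjective p)
    [Module.Projective R Y''] : Function.Surjective (opDualMap (R := R) i) := by
  intro f
  obtain ⟨s, hs⟩ := Module.projective_lifting_property (p.restrictScalars R) LinearMap.id hp
  obtain ⟨k, hk⟩ := LinearMap.exists_factor_of_injective (i.restrictScalars R) hi
    (LinearMap.id - s.comp (p.restrictScalars R)) fun y => (hip _).1 (by
      have := LinearMap.congr_fun hs (p y)
      simp only [LinearMap.comp_apply, LinearMap.restrictScalars_apply,
        LinearMap.id_apply] at this
      simp [this])
  refine ⟨f.comp k, LinearMap.ext fun y => congrArg f (hi ?_)⟩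
  have := hk (i y)
  simpa [hip.apply_apply_eq_zero] using this

end DualMap

variable {X : Type} [AddCommGroup X] [Module R X] [Module A X] [IsScalarTower R A X]
  {Y : Type} [AddCommGroup Y] [Module R Y] [Module A Y] [IsScalarTower R A Y]

/-- A map into the dual of a right module, transposed. -/
def dualFlip {E : Type} [AddCommGroup E] [Module R E] [Module Aᵐᵒᵖ E] [IsScalarTower R Aᵐᵒᵖ E]
    (f : E →ₗ[Aᵐᵒᵖ] (X →ₗ[R] R)) : X →ₗ[A] (E →ₗ[R] R) where
  toFun x := (f.restrictScalars R).flip x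
  map_add' x y := map_add _ x y
  map_smul' a x := by
    ext e
    simp

@[simp] lemma dualFlip_apply {E : Type} [AddCommGroup E] [Module R E] [Module Aᵐᵒᵖ E]
    [IsScalarTower R Aᵐᵒᵖ E] (f : E →ₗ[Aᵐᵒᵖ] (X →ₗ[R] R)) (x : X) (e : E) :
    dualFlip f x e = f e x := rfl

/-- The inverse of `dualFlip`. -/
def dualFlip' {E : Type} [AddCommGroup E] [Module R E] [Module Aᵐᵒᵖ E] [IsScalarTower R Aᵐᵒᵖ E]
    (g : X →ₗ[A] (E →ₗ[R] R)) : E →ₗ[Aᵐᵒᵖ] (X →ₗ[R] R) where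
  toFun e := (g.restrictScalars R).flip e
  map_add' x y := map_add _ x y
  map_smul' a e := by
    ext x
    simp

@[simp] lemma dualFlip'_apply {E : Type} [AddCommGroup E] [Module R E] [Module Aᵐᵒᵖ E]
    [IsScalarTower R Aᵐᵒᵖ E] (g : X →ₗ[A] (E →ₗ[R] R)) (x : X) (e : E) :
    dualFlip' g e x = g x e := rfl

variable (R A X) in
/-- Biduality for left `A`-modules which are finitely generated projective over `R`. -/
noncomputable def bidualEquiv [Module.IsReflexive R X] : X ≃ₗ[A] ((X →ₗ[R] R) →ₗ[R] R) :=
  LinearEquiv.ofBijective (dualFlip (E := X →ₗ[R] R) LinearMap.id)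
    (Module.bijective_dual_eval R X)

@[simp] lemma bidualEquiv_apply [Module.IsReflexive R X] (x : X) (f : X →ₗ[R] R) :
    bidualEquiv R A X x f = f x := rfl

variable (R A X Y) in
/-- Duality identifies `Hom_A(X, Y)` with `Hom_{A^op}(Y*, X*)`. -/
noncomputable def homDualEquiv [Module.IsReflexive R Y] :
    (X →ₗ[A] Y) ≃ₗ[R] ((Y →ₗ[R] R) →ₗ[Aᵐᵒᵖ] (X →ₗ[R] R)) where
  toFun f := dualFlip' ((bidualEquiv R A Y).toLinearMap.comp f)
  invFun g := (bidualEquiv R A Y).symm.toLinearMap.comp (dualFlip g)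
  left_inv f := by
    ext x
    simp only [LinearMap.comp_apply, LinearEquiv.coe_coe]
    rw [LinearEquiv.symm_apply_eq]
    rfl
  right_inv g := by
    ext e x
    simp
  map_add' f g := by ext; simp
  map_smul' r f := by ext; simp

lemma ExtOneVanishes.exists_lift {Z W : Type} [AddCommGroup Z] [Module R Z] [Module A Z]
    [IsScalarTower R A Z] [AddCommGroup W] [Module A W] (h : ExtOneVanishes R A X Y)
    {i : Y →ₗ[A] Z} {p : Z →ₗ[A] W} (hi : Function.Injective i) (hip : Function.Exact i p)
    (hp : Function.Surjective p) (q : X →ₗ[A] W) : ∃ t : X →ₗ[A] Z, ∀ x, p (t x) = q x := by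
  let P : Submodule A (Z × X) := LinearMap.eqLocus (p.comp (LinearMap.fst A Z X))
    (q.comp (LinearMap.snd A Z X))
  let f : P →ₗ[A] X := (LinearMap.snd A Z X).comp P.subtype
  have hf : Function.Surjective f := fun x => by
    obtain ⟨z, hz⟩ := hp (q x)
    exact ⟨⟨(z, x), hz⟩, rfl⟩
  obtain ⟨k, hk⟩ := LinearMap.exists_factor_of_injective (D := LinearMap.ker f) i hi
    (((LinearMap.fst A Z X).comp P.subtype).domRestrict (LinearMap.ker f)) fun d => (hip _).1 (by
      have h1 : p (d : P).1.1 = q (d : P).1.2 := (d : P).2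
      have h2 : (d : P).1.2 = 0 := d.2
      rw [h2, map_zero] at h1
      exact h1)
  obtain ⟨s, hs⟩ := h P f hf k
  obtain ⟨t, ht⟩ := LinearMap.exists_factor_of_ker_le f hf
    ((LinearMap.fst A Z X).comp P.subtype - i.comp s) fun b hb => by
      have h1 := hk ⟨b, hb⟩
      rw [← hs] at h1
      simpa [sub_eq_zero] using h1.symm
  refine ⟨t, fun x => ?_⟩
  obtain ⟨b, rfl⟩ := hf x
  rw [ht]
  have h1 : p b.1.1 = q (f b) := b.2
  simpa [hip.apply_apply_eq_zero] using h1

lemma ExtOneVanishes.dual (h : ExtOneVanishes R A X Y) (hY : IsFinProj R Y) :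
    ExtOneVanishes R Aᵐᵒᵖ (Y →ₗ[R] R) (X →ₗ[R] R) := by
  intro E _ _ _ _ f hf g
  obtain ⟨_, _⟩ := hY
  have : Module.Projective R (Y →ₗ[R] R) := inferInstanceAs (Module.Projective R (Module.Dual R Y))
  have hb := (bidualEquiv R A Y).bijective
  obtain ⟨t, ht⟩ := h.exists_lift (i := (opDualMap f).comp (bidualEquiv R A Y).toLinearMap)
    ((opDualMap_injective hf).comp hb.1)
    (p := opDualMap (LinearMap.ker f).subtype) (fun k => by
      rw [opDualMap_exact f.exact_subtype_ker_map hf k]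
      constructor
      · rintro ⟨k', rfl⟩
        obtain ⟨y, rfl⟩ := hb.2 k'
        exact ⟨y, rfl⟩
      · rintro ⟨y, rfl⟩
        exact ⟨_, rfl⟩)
    (opDualMap_surjective (LinearMap.ker f).subtype_injective f.exact_subtype_ker_map hf)
    (dualFlip g)
  refine ⟨dualFlip' t, fun e => ?_⟩
  ext x
  exact LinearMap.congr_fun (ht x) e

end Duality

section Filtration

set_option linter.unusedSectionVars false

variable {R : Type} [CommRing R] {A : Type} [Ring A] [Algebra R A]
variable {Λ : Type} [Fintype Λ] [PartialOrder Λ]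
variable {Δ : Λ → Type} [∀ l, AddCommGroup (Δ l)] [∀ l, Module R (Δ l)]
  [∀ l, Module A (Δ l)] [∀ l, IsScalarTower R A (Δ l)] {S : Set Λ}

lemma TensorFactor.nonempty_of_surjective {X Y : Type} [AddCommGroup X] [Module A X]
    [AddCommGroup Y] [Module A Y] (h : Nonempty (TensorFactor R A Λ Δ S Y)) (f : X →ₗ[A] Y)
    (hf : Function.Surjective f) (K : Submodule A X) (hK : K = LinearMap.ker f) :
    Nonempty (TensorFactor R A Λ Δ S (X ⧸ K)) := by
  obtain ⟨T⟩ := h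
  exact ⟨⟨T.lam, T.mem, T.U, T.fin, T.proj, ((Submodule.quotEquivOfEq _ _ hK).trans
    (f.quotKerEquivOfSurjective hf)).trans T.iso⟩⟩

variable (R Δ S) in
/-- The step `T ≤ T'` of a chain of submodules has a factor `Δ(l) ⊗ U`. -/
def IsTensorStep {X : Type} [AddCommGroup X] [Module A X] (T T' : Submodule A X) : Prop :=
  Nonempty (TensorFactor R A Λ Δ S (T' ⧸ T.comap T'.subtype))

lemma hasChain_of_exact {X' X X'' : Type} [AddCommGroup X'] [Module A X'] [AddCommGroup X]
    [Module A X] [AddCommGroup X''] [Module A X''] {i : X' →ₗ[A] X} {p : X →ₗ[A] X''}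
    (hi : Function.Injective i) (hip : Function.Exact i p) (hp : Function.Surjective p)
    (h' : HasChain (IsTensorStep R Δ S) (⊤ : Submodule A X'))
    (h'' : HasChain (IsTensorStep R Δ S) (⊤ : Submodule A X'')) :
    HasChain (IsTensorStep R Δ S) (⊤ : Submodule A X) := by
  obtain ⟨n', c', h0', hn', hc', hF'⟩ := h'
  obtain ⟨n'', c'', h0'', hn'', hc'', hF''⟩ := h''
  have key' : ∀ j, HasChain (IsTensorStep R Δ S) ((c' j).map i) := fun j => by
    induction j using Fin.induction with
    | zero => rw [h0', Submodule.map_bot]; exact HasChain.bot _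
    | succ j ih =>
      refine ih.snoc (Submodule.map_mono (hc' (Fin.castSucc_le_succ j))) ?_
      let e := Submodule.equivMapOfInjective i hi (c' j.succ)
      refine TensorFactor.nonempty_of_surjective (hF' j)
        (((c' j.castSucc).comap (c' j.succ).subtype).mkQ.comp e.symm.toLinearMap)
        ((Submodule.mkQ_surjective _).comp e.symm.surjective) _ ?_
      ext y
      obtain ⟨x, rfl⟩ := e.surjective y
      simp [e, hi.eq_iff]
  have key'' : ∀ j, HasChain (IsTensorStep R Δ S) ((c'' j).comap p) := fun j => by
    induction j using Fin.induction with
    | zero =>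
      have := key' (Fin.last n')
      rwa [hn', Submodule.map_top, ← hip.linearMap_ker_eq, ← Submodule.comap_bot, ← h0''] at this
    | succ j ih =>
      refine ih.snoc (Submodule.comap_mono (hc'' (Fin.castSucc_le_succ j))) ?_
      refine TensorFactor.nonempty_of_surjective (hF'' j)
        (((c'' j.castSucc).comap (c'' j.succ).subtype).mkQ.comp
          (p.restrict (p := (c'' j.succ).comap p) (q := c'' j.succ) fun x hx => hx))
        ((Submodule.mkQ_surjective _).comp ?_) _ ?_
      · rintro ⟨y, hy⟩
        obtain ⟨x, rfl⟩ := hp y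
        exact ⟨⟨x, hy⟩, rfl⟩
      · ext x
        simp
  have := key'' (Fin.last n'')
  rwa [hn'', Submodule.comap_top] at this

lemma hasChain_of_subsingleton {X : Type} [AddCommGroup X] [Module A X] [Subsingleton X] :
    HasChain (IsTensorStep R Δ S) (⊤ : Submodule A X) := by
  rw [Subsingleton.elim ⊤ ⊥]
  exact HasChain.bot _

lemma hasChain_of_equiv {X Y : Type} [AddCommGroup X] [Module A X] [AddCommGroup Y]
    [Module A Y] (e : X ≃ₗ[A] Y) (h : HasChain (IsTensorStep R Δ S) (⊤ : Submodule A X)) :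
    HasChain (IsTensorStep R Δ S) (⊤ : Submodule A Y) :=
  hasChain_of_exact (i := e.toLinearMap) (p := (0 : Y →ₗ[A] (Fin 0 → A))) e.injective
    (fun y => by simp) (Function.surjective_to_subsingleton _) h
    hasChain_of_subsingleton

lemma hasChain_of_tensorFactor {X : Type} [AddCommGroup X] [Module A X]
    (h : Nonempty (TensorFactor R A Λ Δ S X)) :
    HasChain (IsTensorStep R Δ S) (⊤ : Submodule A X) := by
  refine (HasChain.bot _).snoc bot_le ?_
  refine TensorFactor.nonempty_of_surjective h (Submodule.topEquiv (R := A) (M := X)).toLinearMap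
    Submodule.topEquiv.surjective _ ?_
  ext x
  simp

/-- The dual of `Δ* ⊗ U` is `Δ ⊗ U*`. -/
lemma exists_equiv_dual_tensor {D U Y : Type} [AddCommGroup D] [Module R D] [Module A D]
    [IsScalarTower R A D] [AddCommGroup U] [Module R U] [AddCommGroup Y] [Module R Y]
    [Module Aᵐᵒᵖ Y] [IsScalarTower R Aᵐᵒᵖ Y] (hD : IsFinProj R D)
    (j : (D →ₗ[R] R) ⊗[R] U ≃ₗ[Aᵐᵒᵖ] Y) :
    Nonempty ((Y →ₗ[R] R) ≃ₗ[A] D ⊗[R] (U →ₗ[R] R)) := by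
  obtain ⟨n, a, b, hab⟩ := hD.exists_dual_basis
  have hj : ∀ (r : R) t, j (r • t) = r • j t := fun r t => (j.restrictScalars R).map_smul r t
  have hext : ∀ {g g' : Y →ₗ[R] R}, (∀ f u, g (j (f ⊗ₜ u)) = g' (j (f ⊗ₜ u))) → g = g' := by
    intro g g' hg
    ext y
    obtain ⟨t, rfl⟩ := j.surjective y
    induction t with
    | zero => simp
    | add s t hs ht => simp [hs, ht]
    | tmul f u => exact hg f u
  let c : Fin n → (Y →ₗ[R] R) →ₗ[R] (U →ₗ[R] R) := fun i =>
    { toFun := fun g => g.comp ((j.restrictScalars R).toLinearMap.comp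
        (TensorProduct.mk R (D →ₗ[R] R) U (a i)))
      map_add' := fun _ _ => rfl
      map_smul' := fun _ _ => rfl }
  let G : (Y →ₗ[R] R) →ₗ[R] D ⊗[R] (U →ₗ[R] R) :=
    ∑ i, (TensorProduct.mk R D (U →ₗ[R] R) (b i)).comp (c i)
  let F : D ⊗[R] (U →ₗ[R] R) →ₗ[R] (Y →ₗ[R] R) := TensorProduct.lift (LinearMap.mk₂ R
    (fun d φ => (TensorProduct.lift ((LinearMap.lsmul R R).compl₁₂ (LinearMap.applyₗ d) φ)).comp
      (j.restrictScalars R).symm.toLinearMap)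
    (fun _ _ _ => hext fun f u => by simp)
    (fun _ _ _ => hext fun f u => by simp [mul_assoc])
    (fun _ _ _ => hext fun f u => by simp [mul_add])
    (fun _ _ _ => hext fun f u => by simp [mul_left_comm]))
  have hF : ∀ d φ f u, F (d ⊗ₜ φ) (j (f ⊗ₜ u)) = f d * φ u := fun d φ f u => by simp [F]
  have hG : ∀ g, G g = ∑ i, b i ⊗ₜ c i g := fun g => by simp [G]
  have hc : ∀ i g u, c i g u = g (j (a i ⊗ₜ u)) := fun _ _ _ => rfl
  let e : D ⊗[R] (U →ₗ[R] R) ≃ₗ[R] (Y →ₗ[R] R) := LinearEquiv.ofLinearMap F G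
    (LinearMap.ext fun g => hext fun f u => by
      have h1 : f = ∑ i, f (b i) • a i := LinearMap.ext fun d => by
        conv_lhs => rw [hab d]
        simp [mul_comm]
      conv_rhs => rw [LinearMap.id_apply, h1, TensorProduct.sum_tmul, map_sum, map_sum]
      rw [LinearMap.comp_apply, hG, map_sum, LinearMap.sum_apply]
      refine Finset.sum_congr rfl fun i _ => ?_
      rw [hF, hc, ← TensorProduct.smul_tmul', hj, map_smul, smul_eq_mul])
    (TensorProduct.ext' fun d φ => by
      have h1 : ∀ i, c i (F (d ⊗ₜ φ)) = a i d • φ := fun i => LinearMap.ext fun u => by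
        rw [hc, hF]
        rfl
      rw [LinearMap.comp_apply, hG, LinearMap.id_apply]
      conv_rhs => rw [hab d, TensorProduct.sum_tmul]
      exact Finset.sum_congr rfl fun i _ => by rw [h1, TensorProduct.smul_tmul])
  have hlin : ∀ (x : A) t, e (x • t) = x • e t := fun x t => by
    induction t with
    | zero => simp
    | add s t hs ht => rw [smul_add, map_add, map_add, smul_add, hs, ht]
    | tmul d φ =>
      refine hext fun f u => ?_
      rw [TensorProduct.smul_tmul', dualModule'_smul_apply, ← map_smul, TensorProduct.smul_tmul']
      exact (hF _ _ _ _).trans (hF d φ (MulOpposite.op x • f) u).symm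
  exact ⟨LinearEquiv.symm { e with map_smul' := hlin }⟩

lemma hasChain_dual_tensor {l : Λ} {U Y : Type} [AddCommGroup U] [Module R U] [AddCommGroup Y]
    [Module R Y] [Module Aᵐᵒᵖ Y] [IsScalarTower R Aᵐᵒᵖ Y] (hΔ : ∀ l, IsFinProj R (Δ l))
    (hU : IsFinProj R U) (j : (Δ l →ₗ[R] R) ⊗[R] U ≃ₗ[Aᵐᵒᵖ] Y) :
    HasChain (IsTensorStep R Δ Set.univ) (⊤ : Submodule A (Y →ₗ[R] R)) := by
  have hU' : IsFinProj R (U →ₗ[R] R) := hU.linearMap ⟨inferInstance, inferInstance⟩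
  exact hasChain_of_tensorFactor ((exists_equiv_dual_tensor (hΔ l) j).map fun e =>
    ⟨l, trivial, ModuleCat.of R (U →ₗ[R] R), hU'.1, hU'.2, e⟩)

/-- If the dual of `M` is filtered by the duals of the modules `Δ(l)`, then `M` is filtered
by the modules `Δ(l)`. -/
lemma InFilt.of_dual {M : Type} [AddCommGroup M] [Module R M] [Module A M]
    [IsScalarTower R A M] (hΔ : ∀ l, IsFinProj R (Δ l)) (hM : IsFinProj R M)
    (hfin : Module.Finite A M)
    (h : InFilt R Aᵐᵒᵖ Λ (fun l => Δ l →ₗ[R] R) Set.univ (M →ₗ[R] R)) :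
    InFilt R A Λ Δ Set.univ M := by
  have key : IsFinProj R (M →ₗ[R] R) ∧ HasChain (IsTensorStep R Δ Set.univ)
      (⊤ : Submodule A ((M →ₗ[R] R) →ₗ[R] R)) := by
    refine InFilt.induction (R := R) (A := Aᵐᵒᵖ) (Q := fun Y => IsFinProj R Y ∧
      HasChain (IsTensorStep R Δ Set.univ) (⊤ : Submodule A (Y →ₗ[R] R))) ?_ ?_ ?_ ?_ h
    · intro Y _ _ _ _ _
      have : Subsingleton (Y →ₗ[R] R) :=
        ⟨fun f g => LinearMap.ext fun x => by rw [Subsingleton.elim x 0, map_zero, map_zero]⟩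
      exact ⟨IsFinProj.of_subsingleton _, hasChain_of_subsingleton⟩
    · intro Y Z _ _ _ _ _ _ _ _ e hY
      refine ⟨hY.1.of_equiv (e.restrictScalars R).symm, hasChain_of_equiv
        (LinearEquiv.ofBijective (opDualMap e.symm.toLinearMap)
          ⟨opDualMap_injective e.symm.surjective, fun f => ⟨opDualMap e.toLinearMap f, ?_⟩⟩) hY.2⟩
      ext z
      simp
    · intro Y _ _ _ _ K hK hYK
      have := hYK.1.2
      have hex := LinearMap.exact_subtype_mkQ K
      exact ⟨IsFinProj.of_exact (i := K.subtype.restrictScalars R) (p := K.mkQ.restrictScalars R)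
          K.subtype_injective hex K.mkQ_surjective hK.1 hYK.1,
        hasChain_of_exact (opDualMap_injective K.mkQ_surjective)
          (opDualMap_exact hex K.mkQ_surjective)
          (opDualMap_surjective K.subtype_injective hex K.mkQ_surjective) hYK.2 hK.2⟩
    · intro l _ U _ _ hU
      have hD : IsFinProj R (Δ l →ₗ[R] R) := (hΔ l).linearMap ⟨inferInstance, inferInstance⟩
      refine ⟨?_, hasChain_dual_tensor (A := A) (Y := (Δ l →ₗ[R] R) ⊗[R] U) hΔ hU
        (LinearEquiv.refl _ _)⟩
      obtain ⟨_, _⟩ := hD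
      obtain ⟨_, _⟩ := hU
      exact ⟨inferInstance, inferInstance⟩
  obtain ⟨_, _⟩ := hM
  exact ⟨hfin, hasChain_of_equiv (bidualEquiv R A M).symm key.2⟩

end Filtration

noncomputable section

/-- Let `M` be a finitely generated `A`-module which is projective over `R`.
If `Ext^1_A(M, ∇(λ)) = 0` for all `λ`, then `M ∈ F(Δ̃)`; dually, if `Ext^1_A(Δ(λ), M) = 0`
for all `λ`, then `M ∈ F(∇̃)`. -/
theorem filtration_criterion_via_ext_one
    (R : Type) [CommRing R] [IsNoetherianRing R]
    (A : Type) [Ring A] [Algebra R A]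
    (Λ : Type) [Fintype Λ] [PartialOrder Λ]
    (Δ : Λ → Type) [∀ l, AddCommGroup (Δ l)] [∀ l, Module R (Δ l)]
    [∀ l, Module A (Δ l)] [∀ l, IsScalarTower R A (Δ l)]
    (Nb : Λ → Type) [∀ l, AddCommGroup (Nb l)] [∀ l, Module R (Nb l)]
    [∀ l, Module A (Nb l)] [∀ l, IsScalarTower R A (Nb l)]
    (h : SplitQH R A Λ Δ) (hc : IsCostandard R A Λ Δ Nb)
    (M : Type) [AddCommGroup M] [Module R M] [Module A M] [IsScalarTower R A M]
    [Module.Finite A M] (hMproj : Module.Projective R M) :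
    ((∀ l : Λ, extVanish A M (Nb l) 1) → InFilt R A Λ Δ Set.univ M) ∧
    ((∀ l : Λ, extVanish A (Δ l) M 1) → InFilt R A Λ Nb Set.univ M) := by
  obtain ⟨⟨hop⟩, hN, hN0, hExt⟩ := hc
  have hNE : ∀ l m, ExtOneVanishes R A (Δ l) (Nb m) := fun l m =>
    (hExt l m 1 one_pos).extOneVanishes
  refine ⟨fun hM => ?_, fun hM => h.inFilt_of_extOneVanishes hN hN0 hNE inferInstance hMproj
    fun l => (hM l).extOneVanishes⟩
  have := h.algFin
  have hMfin : IsFinProj R M := ⟨Module.Finite.trans A M, hMproj⟩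
  have hΔ : ∀ l, IsFinProj R (Δ l) := fun l => ⟨h.deltaFinR l, h.deltaProjR l⟩
  have hNb : ∀ l, IsFinProj R (Nb l) := fun l => by
    obtain ⟨L, hL, hmem⟩ := exists_isDescending (Λ := Λ)
    refine ((h.isGood_self hL hmem).isFinProj_hom (fun m _ => hNE m l) fun m _ => ?_).of_equiv
      (LinearMap.ringLmapEquivSelf A R (Nb l)).symm
    by_cases hml : m = l
    · subst hml
      exact IsFinProj.of_equiv (W := R) ⟨inferInstance, inferInstance⟩ (hN m).some
    · have : Subsingleton (Δ m →ₗ[A] Nb l) :=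
        ⟨fun f g => by rw [hN0 m l hml f, hN0 m l hml g]⟩
      exact IsFinProj.of_subsingleton _
  have hrefl : ∀ l, Module.IsReflexive R (Nb l) := fun l => by
    obtain ⟨_, _⟩ := hNb l
    infer_instance
  have hDM : IsFinProj R (M →ₗ[R] R) := hMfin.linearMap ⟨inferInstance, inferInstance⟩
  have := hDM.1
  refine InFilt.of_dual hΔ hMfin inferInstance
    (hop.inFilt_of_extOneVanishes (N := fun l => (Δ l →ₗ[R] R)) (fun l => ?_) (fun l m hlm f => ?_)
    (fun l m => (hNE m l).dual (hNb l)) (Module.Finite.of_restrictScalars_finite R Aᵐᵒᵖ _) hDM.2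
    fun l => ((hM l).extOneVanishes).dual (hNb l))
  · obtain ⟨e⟩ := hN l
    exact ⟨(homDualEquiv R A (Δ l) (Nb l)).symm.trans e⟩
  · rw [← (homDualEquiv R A (Δ m) (Nb l)).symm.map_eq_zero_iff]
    exact hN0 m l hlm.symm _

end
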